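/- arXiv:2006.03801 — 7 statements merged into one kernel-verified Lean document; each statement's English description precedes it below -/
import Mathlib

section
/- For every n ≥ 5, the complete graph K_n is not graceful. -/
/-- The induced edge label `|φ(u) − φ(v)|` of an edge, as a function on `Sym2 V`. -/
def edgeLabel {V : Type*} (φ : V → ℕ) : Sym2 V → ℕ :=
  Sym2.lift ⟨fun u v => Nat.dist (φ u) (φ v), fun u v => Nat.dist_comm (φ u) (φ v)⟩

/-- `φ` is a graceful labeling of the graph `G` with `q` edges: it is injective,
takes values in `{0, 1, ..., q}`, and the induced edge labels `|φ(u) − φ(v)|`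
form exactly the set `{1, 2, ..., q}`, each value occurring once. -/
def IsGracefulLabeling {V : Type*} (G : SimpleGraph V) (φ : V → ℕ) : Prop :=
  Function.Injective φ ∧
  (∀ v, φ v ≤ Nat.card G.edgeSet) ∧
  Set.InjOn (edgeLabel φ) G.edgeSet ∧
  edgeLabel φ '' G.edgeSet = Set.Icc 1 (Nat.card G.edgeSet)

/-- A graph is graceful if it admits a graceful labeling. -/
def IsGraceful {V : Type*} (G : SimpleGraph V) : Prop :=
  ∃ φ : V → ℕ, IsGracefulLabeling G φ

/-!
The labels of a graceful labeling of `K_n` are the marks of a perfect Golomb ruler of length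
`q = n.choose 2`, and such a ruler has length at most `6`. Indeed `0` and `q` are marks, and up to
reflection so is `1`, to measure `q - 1`. Every pair of marks at distance `q - 2` other than
`(0, q - 2)` repeats the distance `1`, so `q - 2` is a mark; then likewise `q - 4` can only be
measured by `(4, q)`. With the marks `0, 1, 4, q - 2, q`, every way of measuring `q - 5` repeats one
of the distances `1`, `2`, `3` when `6 < q`.
-/

/-- `S` is the set of marks of a perfect Golomb ruler of length `q`: every distance `1, ..., q` is
measured by exactly one pair of marks. The pair at distance `d` is encoded by its smaller mark. -/
structure IsPerfectGolombRuler (S : Set ℕ) (q : ℕ) : Prop where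
  le_length : ∀ ⦃a⦄, a ∈ S → a ≤ q
  existsUnique_mem_add_mem : ∀ d ∈ Set.Icc 1 q, ∃! a, a ∈ S ∧ a + d ∈ S

namespace IsPerfectGolombRuler

variable {S : Set ℕ} {q : ℕ}

theorem eq_of_sub_eq_sub (h : IsPerfectGolombRuler S q) {a b c d : ℕ} (ha : a ∈ S) (hb : b ∈ S)
    (hc : c ∈ S) (hd : d ∈ S) (hab : a < b) (hsub : b - a = d - c) : a = c := by
  have hbq := h.le_length hb
  refine (h.existsUnique_mem_add_mem (b - a) ⟨by lia, by lia⟩).unique ⟨ha, ?_⟩ ⟨hc, ?_⟩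
  · rwa [Nat.add_sub_cancel' hab.le]
  · rwa [hsub, Nat.add_sub_cancel' (by lia)]

theorem exists_le_mem_add_mem (h : IsPerfectGolombRuler S q) {k : ℕ} (hk : k < q) :
    ∃ a ≤ k, a ∈ S ∧ a + (q - k) ∈ S := by
  obtain ⟨a, ⟨ha, hb⟩, -⟩ := h.existsUnique_mem_add_mem (q - k) ⟨by lia, by lia⟩
  have hbq := h.le_length hb
  exact ⟨a, by lia, ha, hb⟩

theorem zero_mem_and_length_mem (h : IsPerfectGolombRuler S q) (hq : 0 < q) : 0 ∈ S ∧ q ∈ S := by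
  obtain ⟨a, ha, h₀, h_q⟩ := h.exists_le_mem_add_mem hq
  obtain rfl : a = 0 := by lia
  exact ⟨h₀, by simpa using h_q⟩

theorem one_mem_or_sub_one_mem (h : IsPerfectGolombRuler S q) (hq : 1 < q) :
    1 ∈ S ∨ q - 1 ∈ S := by
  obtain ⟨a, ha, haS, hbS⟩ := h.exists_le_mem_add_mem hq
  interval_cases a
  · exact .inr (by simpa using hbS)
  · exact .inl haS

theorem reflect (h : IsPerfectGolombRuler S q) :
    IsPerfectGolombRuler {a | a ≤ q ∧ q - a ∈ S} q where
  le_length _ ha := ha.1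
  existsUnique_mem_add_mem d hd := by
    obtain ⟨a, ⟨ha, hb⟩, huniq⟩ := h.existsUnique_mem_add_mem d hd
    have hbq := h.le_length hb
    refine ⟨q - (a + d), ⟨⟨by lia, ?_⟩, by lia, ?_⟩, ?_⟩
    · rwa [Nat.sub_sub_self hbq]
    · rwa [show q - (q - (a + d) + d) = a by lia]
    · rintro c ⟨⟨-, hc⟩, hcd, hcd'⟩
      have hca := huniq (q - (c + d)) ⟨hcd', by rwa [show q - (c + d) + d = q - c by lia]⟩
      lia

theorem eq_zero_of_add_one_eq (h : IsPerfectGolombRuler S q) (h₁ : 1 ∈ S) {a b : ℕ} (ha : a ∈ S)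
    (hb : b ∈ S) (hab : a + 1 = b) : a = 0 :=
  have h₀ := (h.zero_mem_and_length_mem (h.le_length h₁)).1
  h.eq_of_sub_eq_sub ha hb h₀ h₁ (by lia) (by lia)

theorem sub_two_mem (h : IsPerfectGolombRuler S q) (h₁ : 1 ∈ S) (hq : 2 < q) : q - 2 ∈ S := by
  have h_q := (h.zero_mem_and_length_mem (by lia)).2
  obtain ⟨a, ha, haS, hbS⟩ := h.exists_le_mem_add_mem hq
  interval_cases a
  · simpa using hbS
  · have := h.eq_zero_of_add_one_eq h₁ hbS h_q (by lia)
    lia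
  · have := h.eq_zero_of_add_one_eq h₁ h₁ haS rfl
    lia

theorem eq_sub_two_of_add_two_eq (h : IsPerfectGolombRuler S q) (h₁ : 1 ∈ S) (hq : 2 < q)
    {a b : ℕ} (ha : a ∈ S) (hb : b ∈ S) (hab : a + 2 = b) : a = q - 2 :=
  have h_q := (h.zero_mem_and_length_mem (by lia)).2
  h.eq_of_sub_eq_sub ha hb (h.sub_two_mem h₁ hq) h_q (by lia) (by lia)

theorem four_mem (h : IsPerfectGolombRuler S q) (h₁ : 1 ∈ S) (hq : 4 < q) : 4 ∈ S := by
  have h_q := (h.zero_mem_and_length_mem (by lia)).2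
  have h_q₂ := h.sub_two_mem h₁ (by lia)
  obtain ⟨a, ha, haS, hbS⟩ := h.exists_le_mem_add_mem hq
  interval_cases a
  · have := h.eq_sub_two_of_add_two_eq h₁ (by lia) hbS h_q₂ (by lia)
    lia
  · have := h.eq_zero_of_add_one_eq h₁ hbS h_q₂ (by lia)
    lia
  · have := h.eq_zero_of_add_one_eq h₁ h₁ haS rfl
    lia
  · have := h.eq_zero_of_add_one_eq h₁ hbS h_q (by lia)
    lia
  · exact haS

theorem length_le_six_of_one_mem (h : IsPerfectGolombRuler S q) (h₁ : 1 ∈ S) : q ≤ 6 := by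
  by_contra! hq
  have h_q := (h.zero_mem_and_length_mem (by lia)).2
  have h_q₂ := h.sub_two_mem h₁ (by lia)
  have h₄ := h.four_mem h₁ (by lia)
  obtain ⟨a, ha, haS, hbS⟩ := h.exists_le_mem_add_mem (k := 5) (by lia)
  interval_cases a
  · have := h.eq_of_sub_eq_sub hbS h_q₂ h₁ h₄ (by lia) (by lia)
    lia
  · have := h.eq_sub_two_of_add_two_eq h₁ (by lia) hbS h_q₂ (by lia)
    lia
  · have := h.eq_zero_of_add_one_eq h₁ h₁ haS rfl
    lia
  · have := h.eq_zero_of_add_one_eq h₁ haS h₄ rfl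
    lia
  · have := h.eq_zero_of_add_one_eq h₁ hbS h_q (by lia)
    lia
  · have := h.eq_zero_of_add_one_eq h₁ h₄ haS rfl
    lia

theorem length_le_six (h : IsPerfectGolombRuler S q) : q ≤ 6 := by
  by_contra! hq
  rcases h.one_mem_or_sub_one_mem (by lia) with h₁ | h_q₁
  · exact hq.not_ge (h.length_le_six_of_one_mem h₁)
  · exact hq.not_ge (h.reflect.length_le_six_of_one_mem ⟨by lia, h_q₁⟩)

end IsPerfectGolombRuler

theorem edgeLabel_mk_of_le {V : Type*} {φ : V → ℕ} {u v : V} (h : φ u ≤ φ v) :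
    edgeLabel φ s(u, v) = φ v - φ u :=
  Nat.dist_eq_sub_of_le h

theorem IsGracefulLabeling.isPerfectGolombRuler_range {V : Type*} {φ : V → ℕ}
    (h : IsGracefulLabeling (⊤ : SimpleGraph V) φ) :
    IsPerfectGolombRuler (Set.range φ) (Nat.card (⊤ : SimpleGraph V).edgeSet) := by
  obtain ⟨-, hle, hinjOn, himage⟩ := h
  refine ⟨Set.forall_mem_range.2 hle, fun d hd ↦ existsUnique_of_exists_of_unique ?_ ?_⟩
  · obtain ⟨e, -, rfl⟩ := himage.ge hd
    induction e with | _ u v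
    wlog huv : φ u ≤ φ v generalizing u v
    · rw [Sym2.eq_swap] at hd ⊢
      exact this v u hd (le_of_not_ge huv)
    refine ⟨φ u, ⟨u, rfl⟩, v, ?_⟩
    rw [edgeLabel_mk_of_le huv, Nat.add_sub_cancel' huv]
  · rintro _ _ ⟨⟨u, rfl⟩, v, hv⟩ ⟨⟨w, rfl⟩, x, hx⟩
    have hd₁ : 1 ≤ d := hd.1
    have huv : u ≠ v := by rintro rfl; lia
    have hwx : w ≠ x := by rintro rfl; lia
    have hedge : s(u, v) = s(w, x) := by
      refine hinjOn (by simpa using huv) (by simpa using hwx) ?_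
      rw [edgeLabel_mk_of_le (by lia), edgeLabel_mk_of_le (by lia)]
      lia
    obtain ⟨rfl, rfl⟩ | ⟨rfl, rfl⟩ := Sym2.eq_iff.1 hedge <;> lia

theorem natCard_edgeSet_top (V : Type*) [Finite V] :
    Nat.card (⊤ : SimpleGraph V).edgeSet = (Nat.card V).choose 2 := by
  classical
  have := Fintype.ofFinite V
  rw [Nat.card_eq_fintype_card, Nat.card_eq_fintype_card, ← SimpleGraph.edgeFinset_card,
    SimpleGraph.card_edgeFinset_top_eq_card_choose_two]

theorem completeGraph_not_graceful_general {V : Type*} (hV : 5 ≤ Nat.card V) :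
    ¬ IsGraceful (⊤ : SimpleGraph V) := by
  rintro ⟨φ, hφ⟩
  have : Finite V := Nat.finite_of_card_ne_zero (by lia)
  have hlength : (Nat.card V).choose 2 ≤ 6 :=
    natCard_edgeSet_top V ▸ hφ.isPerfectGolombRuler_range.length_le_six
  have hchoose : Nat.choose 5 2 ≤ (Nat.card V).choose 2 := Nat.choose_le_choose 2 hV
  exact absurd (hchoose.trans hlength) (by decide)

/-- For every `n ≥ 5`, the complete graph `K_n` is not graceful. -/
theorem completeGraph_not_graceful (n : ℕ) (hn : 5 ≤ n) :
    ¬ IsGraceful (⊤ : SimpleGraph (Fin n)) := by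
  exact completeGraph_not_graceful_general (by rwa [Nat.card_fin])
end

section
/- Let G be a finite simple graph with q ≥ 1 edges in which every vertex has even degree. If G is graceful, then q ≡ 0 (mod 4) or q ≡ 3 (mod 4); equivalently, q(q+1)/2 is even. -/
/-!
Compute the parity of the sum of all edge labels in two ways. Modulo 2 the label of `uv` is
`φ u + φ v`, so the sum is congruent to `∑ v, deg v * φ v`, which is even when all degrees are.
For a graceful labeling the same sum is `1 + 2 + ⋯ + q`, which is even only if `q` is `0` or `3`
modulo `4`.
-/

lemma natDist_modEq_add (a b : ℕ) : Nat.dist a b ≡ a + b [MOD 2] := by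
  unfold Nat.dist Nat.ModEq
  omega

lemma edgeLabel_modEq_sum_toFinset {V : Type*} [DecidableEq V] (φ : V → ℕ) {e : Sym2 V}
    (he : ¬ e.IsDiag) : edgeLabel φ e ≡ ∑ v ∈ e.toFinset, φ v [MOD 2] := by
  induction e with
  | _ a b =>
    rw [Sym2.toFinset_mk_eq, Finset.sum_pair (by simpa using he)]
    exact natDist_modEq_add (φ a) (φ b)

lemma even_sum_Icc_one_iff (n : ℕ) : Even (∑ i ∈ Finset.Icc 1 n, i) ↔ n % 4 = 0 ∨ n % 4 = 3 := by
  induction n with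
  | zero => simp
  | succ n ih =>
    rw [Finset.sum_Icc_succ_top (by omega), Nat.even_add, ih, Nat.even_iff]
    omega

section EdgeSums

variable {V : Type*} (G : SimpleGraph V)

lemma card_filter_edgeFinset_mem [DecidableEq V] [Fintype G.edgeSet] (v : V) :
    (G.edgeFinset.filter (v ∈ ·)).card = Nat.card (G.neighborSet v) := by
  rw [← Nat.card_congr (G.incidenceSetEquivNeighborSet v)]
  exact (Nat.subtype_card _ fun e => by simp [SimpleGraph.incidenceSet]).symm

lemma sum_edgeFinset_sum_toFinset {M : Type*} [AddCommMonoid M] [DecidableEq V]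
    [Fintype G.edgeSet] (f : V → M) {s : Finset V} (hs : G.support ⊆ s) :
    ∑ e ∈ G.edgeFinset, ∑ v ∈ e.toFinset, f v = ∑ v ∈ s, Nat.card (G.neighborSet v) • f v := by
  have mem_of_incident {e : Sym2 V} {v : V} (he : e ∈ G.edgeSet) (hv : v ∈ e) : v ∈ s :=
    hs (G.mem_support.2 ⟨_, G.incidence_other_prop ⟨he, hv⟩⟩)
  calc ∑ e ∈ G.edgeFinset, ∑ v ∈ e.toFinset, f v
      = ∑ v ∈ s, ∑ e ∈ G.edgeFinset with v ∈ e, f v :=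
        Finset.sum_comm' fun e v => by
          simpa [and_comm] using fun hv he => mem_of_incident he hv
    _ = ∑ v ∈ s, Nat.card (G.neighborSet v) • f v := by
        simp only [Finset.sum_const, card_filter_edgeFinset_mem]

lemma support_subset_biUnion_toFinset [DecidableEq V] [Fintype G.edgeSet] :
    G.support ⊆ G.edgeFinset.biUnion Sym2.toFinset := fun v ⟨w, hvw⟩ => by
  simpa using ⟨s(v, w), hvw, Sym2.mem_mk_left v w⟩

variable {G}

lemma even_sum_edgeLabel [Fintype G.edgeSet] (heven : ∀ v, Even (Nat.card (G.neighborSet v)))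
    (φ : V → ℕ) : Even (∑ e ∈ G.edgeFinset, edgeLabel φ e) := by
  classical
  have hmod : ∑ e ∈ G.edgeFinset, edgeLabel φ e ≡
      ∑ e ∈ G.edgeFinset, ∑ v ∈ e.toFinset, φ v [MOD 2] :=
    Nat.ModEq.sum fun e he => edgeLabel_modEq_sum_toFinset φ (G.not_isDiag_of_mem_edgeFinset he)
  have hdouble : ∑ e ∈ G.edgeFinset, ∑ v ∈ e.toFinset, φ v =
      ∑ v ∈ G.edgeFinset.biUnion Sym2.toFinset, Nat.card (G.neighborSet v) • φ v :=
    sum_edgeFinset_sum_toFinset G φ (support_subset_biUnion_toFinset G)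
  rw [Nat.even_iff, hmod, ← Nat.even_iff, hdouble]
  exact Finset.even_sum _ fun v _ => (heven v).mul_right (φ v)

end EdgeSums

theorem eulerian_graceful_edge_count_general {V : Type*} {G : SimpleGraph V}
    (heven : ∀ v : V, Even (Nat.card (G.neighborSet v))) {φ : V → ℕ}
    (hφ : Set.BijOn (edgeLabel φ) G.edgeSet (Set.Icc 1 (Nat.card G.edgeSet))) :
    Nat.card G.edgeSet % 4 = 0 ∨ Nat.card G.edgeSet % 4 = 3 := by
  have : Fintype G.edgeSet := (hφ.finite_iff_finite.2 (Set.finite_Icc _ _)).fintype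
  have hsum : ∑ e ∈ G.edgeFinset, edgeLabel φ e = ∑ i ∈ Finset.Icc 1 (Nat.card G.edgeSet), i :=
    Finset.sum_nbij (edgeLabel φ) (by simpa [Set.MapsTo] using hφ.mapsTo)
      (by simpa using hφ.injOn) (by simpa using hφ.surjOn) fun _ _ => rfl
  rw [← even_sum_Icc_one_iff, ← hsum]
  exact even_sum_edgeLabel heven φ

/-- If every vertex of a graph `G` with `q ≥ 1` edges has even degree and
`G` is graceful, then `q ≡ 0 (mod 4)` or `q ≡ 3 (mod 4)`. -/
theorem eulerian_graceful_edge_count {V : Type*} [Fintype V] (G : SimpleGraph V)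
    (hq : 1 ≤ Nat.card G.edgeSet)
    (heven : ∀ v : V, Even (Nat.card (G.neighborSet v)))
    (h : IsGraceful G) :
    Nat.card G.edgeSet % 4 = 0 ∨ Nat.card G.edgeSet % 4 = 3 := by
  obtain ⟨φ, -, -, hinj, himg⟩ := h
  exact eulerian_graceful_edge_count_general heven (himg ▸ hinj.bijOn_image)
end

section
/- Let m, n ≥ 3 with m ≡ 3 (mod 4) and n ≡ 3 (mod 4), and let G be the graph obtained from vertex-disjoint cycles C_m and C_n by identifying one vertex of C_m with one vertex of C_n (so G consists of two cycles having exactly one vertex in common, with m + n − 1 vertices and m + n edges). Then G is not graceful. -/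
/-!
A label `|φ u - φ v|` has the same parity as `φ u + φ v`, so the sum of all edge labels has the
parity of `∑ v, deg v * φ v`. When all degrees are even this is even, whereas in a graceful labeling
the labels sum to `q (q + 1) / 2`, which is odd for `q ≡ 1, 2 (mod 4)` (Rosa's parity condition).
Two cycles with one common vertex are traversed by an Eulerian circuit, so all degrees are even, and
here `q = m + n ≡ 2 (mod 4)`.
-/

section Labels

variable {V : Type*} {G : SimpleGraph V}

theorem edgeLabel_mk_cast_zmod_two (φ : V → ℕ) (u v : V) :
    (edgeLabel φ s(u, v) : ZMod 2) = φ u + φ v := by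
  rw [← Nat.cast_add, ZMod.natCast_eq_natCast_iff']
  simp only [edgeLabel, Sym2.lift_mk, Nat.dist]
  omega

theorem edgeLabel_cast_zmod_two_eq_sum_toFinset [DecidableEq V] (φ : V → ℕ) {e : Sym2 V}
    (he : ¬ e.IsDiag) : (edgeLabel φ e : ZMod 2) = ∑ v ∈ e.toFinset, (φ v : ZMod 2) := by
  induction e with
  | _ u v =>
    rw [edgeLabel_mk_cast_zmod_two, Sym2.toFinset_mk_eq, Finset.sum_pair (by simpa using he)]

theorem sum_edgeFinset_sum_toFinset_eq_sum_degree_nsmul {M : Type*} [AddCommMonoid M] [Fintype V]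
    [DecidableEq V] [DecidableRel G.Adj] (f : V → M) :
    ∑ e ∈ G.edgeFinset, ∑ v ∈ e.toFinset, f v = ∑ v, G.degree v • f v := by
  have swap : ∑ e ∈ G.edgeFinset, ∑ v ∈ e.toFinset, f v
      = ∑ v, ∑ _e ∈ G.incidenceFinset v, f v :=
    Finset.sum_comm' fun e v => by simp [G.incidenceFinset_eq_filter v]
  simp only [swap, Finset.sum_const, G.card_incidenceFinset_eq_degree]

theorem even_sum_edgeLabel_of_even_degree [Fintype V] [DecidableRel G.Adj]
    (hdeg : ∀ v, Even (G.degree v)) (φ : V → ℕ) : Even (∑ e ∈ G.edgeFinset, edgeLabel φ e) := by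
  classical
  rw [← ZMod.natCast_eq_zero_iff_even, Nat.cast_sum]
  calc ∑ e ∈ G.edgeFinset, (edgeLabel φ e : ZMod 2)
      = ∑ e ∈ G.edgeFinset, ∑ v ∈ e.toFinset, (φ v : ZMod 2) :=
        Finset.sum_congr rfl fun e he =>
          edgeLabel_cast_zmod_two_eq_sum_toFinset φ (G.not_isDiag_of_mem_edgeFinset he)
    _ = ∑ v, G.degree v • (φ v : ZMod 2) := sum_edgeFinset_sum_toFinset_eq_sum_degree_nsmul _
    _ = 0 := Finset.sum_eq_zero fun v _ => by
        rw [nsmul_eq_mul, (ZMod.natCast_eq_zero_iff_even).2 (hdeg v), zero_mul]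

theorem IsGracefulLabeling.two_mul_sum_edgeLabel [Fintype G.edgeSet] {φ : V → ℕ}
    (h : IsGracefulLabeling G φ) : 2 * ∑ e ∈ G.edgeFinset, edgeLabel φ e
      = Nat.card G.edgeSet * (Nat.card G.edgeSet + 1) := by
  obtain ⟨-, -, hinj, himage⟩ := h
  set q := Nat.card G.edgeSet
  have himage' : G.edgeFinset.image (edgeLabel φ) = Finset.Icc 1 q := by
    simpa [← Finset.coe_inj] using himage
  calc 2 * ∑ e ∈ G.edgeFinset, edgeLabel φ e
      = 2 * ∑ i ∈ Finset.Icc 1 q, i := by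
        rw [← himage', Finset.sum_image (by simpa using hinj)]
    _ = 2 * ∑ i ∈ Finset.range (q + 1), i := by
        rw [Finset.range_eq_Ico, Finset.sum_eq_sum_Ico_succ_bot (Nat.add_one_pos q), zero_add,
          zero_add, Finset.Ico_add_one_right_eq_Icc]
    _ = q * (q + 1) := by
        rw [mul_comm, Finset.sum_range_id_mul_two, Nat.add_sub_cancel, mul_comm]

end Labels

section Walks

variable {V : Type*} {G : SimpleGraph V}

theorem card_edgeSet_eq_length_of_isEulerian [DecidableEq V] {u v : V} {p : G.Walk u v}
    (hp : p.IsEulerian) : Nat.card G.edgeSet = p.length := by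
  let := hp.fintypeEdgeSet
  rw [Nat.card_eq_fintype_card, ← SimpleGraph.edgeFinset_card, ← hp.edgesFinset_eq]
  exact p.length_edges

theorem edges_disjoint_of_support_inter_subset_singleton {a b c d v : V} {p : G.Walk a b}
    {q : G.Walk c d} (h : ∀ x ∈ p.support, x ∈ q.support → x = v) : p.edges.Disjoint q.edges := by
  intro e hp hq
  induction e with
  | _ x y =>
    have hx : x = v := h x (p.fst_mem_support_of_mem_edges hp) (q.fst_mem_support_of_mem_edges hq)
    have hy : y = v := h y (p.snd_mem_support_of_mem_edges hp) (q.snd_mem_support_of_mem_edges hq)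
    exact (p.adj_of_mem_edges hp).ne (hx.trans hy.symm)

theorem isEulerian_append [DecidableEq V] {u v w : V} {p : G.Walk u v} {q : G.Walk v w}
    (hp : p.IsTrail) (hq : q.IsTrail) (hdisj : p.edges.Disjoint q.edges)
    (hcover : ∀ e ∈ G.edgeSet, e ∈ p.edges ∨ e ∈ q.edges) : (p.append q).IsEulerian :=
  ((p.isTrail_append q).2 ⟨hp, hq, hdisj⟩).isEulerian_of_forall_mem fun e he => by
    simpa only [SimpleGraph.Walk.edges_append, List.mem_append] using hcover e he

end Walks

theorem two_cycles_one_common_vertex_not_graceful_general {V : Type*} [Fintype V]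
    {G : SimpleGraph V} [DecidableRel G.Adj] (hdeg : ∀ v, Even (G.degree v))
    (hcard : Nat.card G.edgeSet % 4 = 1 ∨ Nat.card G.edgeSet % 4 = 2) : ¬ IsGraceful G := by
  rintro ⟨φ, hφ⟩
  have hdvd : 4 ∣ Nat.card G.edgeSet * (Nat.card G.edgeSet + 1) := by
    rw [← hφ.two_mul_sum_edgeLabel]
    exact mul_dvd_mul_left 2 (even_sum_edgeLabel_of_even_degree hdeg φ).two_dvd
  rw [Nat.dvd_iff_mod_eq_zero, Nat.mul_mod, Nat.add_mod] at hdvd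
  rcases hcard with h | h <;> exact absurd (h ▸ hdvd) (by decide)

/-- If `G` consists of two cycles, of lengths `m ≡ 3 (mod 4)` and
`n ≡ 3 (mod 4)`, sharing exactly one vertex `v` (so `G` has all its vertices and
edges on the two cycles, which meet only at `v`), then `G` is not graceful. -/
theorem two_cycles_one_common_vertex_not_graceful {V : Type*} [Fintype V]
    (G : SimpleGraph V) (m n : ℕ) (hm : 3 ≤ m) (hn : 3 ≤ n)
    (hm4 : m % 4 = 3) (hn4 : n % 4 = 3) (v : V)
    (c₁ c₂ : G.Walk v v) (hc₁ : c₁.IsCycle) (hc₂ : c₂.IsCycle)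
    (hl₁ : c₁.length = m) (hl₂ : c₂.length = n)
    (hcommon : ∀ x : V, x ∈ c₁.support → x ∈ c₂.support → x = v)
    (hcover : ∀ x : V, x ∈ c₁.support ∨ x ∈ c₂.support)
    (hedges : ∀ e ∈ G.edgeSet, e ∈ c₁.edges ∨ e ∈ c₂.edges) :
    ¬ IsGraceful G := by
  classical
  have heuler : (c₁.append c₂).IsEulerian := isEulerian_append hc₁.isTrail hc₂.isTrail
    (edges_disjoint_of_support_inter_subset_singleton hcommon) hedges
  have hcard : Nat.card G.edgeSet = m + n := by
    rw [card_edgeSet_eq_length_of_isEulerian heuler, SimpleGraph.Walk.length_append, hl₁, hl₂]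
  exact two_cycles_one_common_vertex_not_graceful_general
    (fun _ => heuler.even_degree_iff.2 fun hne => (hne rfl).elim) (by omega)
end

section
/- Let P be the path with n edges (hence n + 1 vertices), where n ≥ 8. Then for every vertex u of P and every integer i with 0 ≤ i ≤ n, there exists a graceful labeling α of P such that α(u) = i; that is, every vertex of a sufficiently long path is i-attractive for every admissible label i. -/
/-!
Cut a graceful labeling of a path open at a threshold `c`: raise the labels `≥ c` by `m + 1` and
fill the gap with a graceful labeling of a path with `m` edges. If every edge crosses the threshold,
that is, if the outer labeling is an `α`-labeling, then all outer edge labels grow by `m + 1`, so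
once the edge joining the two paths gets the label `m + 1`, the result is again graceful. The
prescribed label is put at the prescribed vertex in one of the two paths, usually by a zigzag
`0, n, 1, n - 1, ...`, and labelings with a prescribed end label, which exist by a theorem of Rosa,
supply the other path. By reversal and complementation it suffices to treat `2 * u ≤ n` and
`2 * i ≤ n`. Up to these symmetries only `(n, u, i) = (8 * k, 4 * k, k)`, `u = i = n / 2` and
`(u, i) = (4 * k + 1, 3 * k)` escape this scheme and need labelings of their own.
-/

/-- The labels `f 0, f 1, ..., f n` read along a path with `n` edges form a graceful labeling.
Values of `f` beyond `n` are irrelevant; only the injectivity of the edge labels is required, since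
`n` distinct edge labels between `1` and `n` exhaust `{1, ..., n}`. -/
structure IsGracefulSeq (n : ℕ) (f : ℕ → ℕ) : Prop where
  le : ∀ j ≤ n, f j ≤ n
  inj : ∀ j ≤ n, ∀ k ≤ n, f j = f k → j = k
  dist_inj : ∀ j < n, ∀ k < n,
    Nat.dist (f j) (f (j + 1)) = Nat.dist (f k) (f (k + 1)) → j = k

/-- An `α`-labeling (in the sense of Rosa) of the path with `n` edges: a graceful labeling in which
every edge joins a low label, one below the threshold `c`, to a high label. Following the use made
of it here, `c` is the number of low labels, rather than the largest of them. -/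
structure IsAlphaSeq (n c : ℕ) (f : ℕ → ℕ) : Prop extends IsGracefulSeq n f where
  threshold_le : c ≤ n + 1
  crosses : ∀ j < n, (f j < c ↔ c ≤ f (j + 1))

section Symmetries

variable {n c : ℕ} {f : ℕ → ℕ}

theorem IsGracefulSeq.reverse (h : IsGracefulSeq n f) : IsGracefulSeq n fun j => f (n - j) := by
  have pred : ∀ j < n, n - j = n - (j + 1) + 1 := by omega
  refine ⟨fun j hj => h.le _ (by omega), fun j hj k hk e => ?_, fun j hj k hk e => ?_⟩
  · have := h.inj (n - j) (by omega) (n - k) (by omega) e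
    omega
  · rw [pred j hj, pred k hk, Nat.dist_comm, Nat.dist_comm (f (_ + 1))] at e
    have := h.dist_inj (n - (j + 1)) (by omega) (n - (k + 1)) (by omega) e
    omega

theorem IsGracefulSeq.complement (h : IsGracefulSeq n f) : IsGracefulSeq n fun j => n - f j := by
  have dist_eq : ∀ j < n, Nat.dist (n - f j) (n - f (j + 1)) = Nat.dist (f j) (f (j + 1)) := by
    intro j hj
    have := h.le j (by omega)
    have := h.le (j + 1) (by omega)
    unfold Nat.dist
    omega
  refine ⟨fun j _ => Nat.sub_le _ _, fun j hj k hk e => ?_, fun j hj k hk e => ?_⟩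
  · have := h.le j hj
    have := h.le k hk
    exact h.inj j hj k hk (by omega)
  · rw [dist_eq j hj, dist_eq k hk] at e
    exact h.dist_inj j hj k hk e

theorem IsAlphaSeq.reverse (h : IsAlphaSeq n c f) : IsAlphaSeq n c fun j => f (n - j) := by
  refine ⟨h.toIsGracefulSeq.reverse, h.threshold_le, fun j hj => ?_⟩
  have := h.crosses (n - (j + 1)) (by omega)
  rw [show n - j = n - (j + 1) + 1 by omega]
  omega

theorem IsAlphaSeq.complement (h : IsAlphaSeq n c f) :
    IsAlphaSeq n (n + 1 - c) fun j => n - f j := by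
  refine ⟨h.toIsGracefulSeq.complement, Nat.sub_le _ _, fun j hj => ?_⟩
  have := h.threshold_le
  have := h.crosses j hj
  have := h.le j (by omega)
  have := h.le (j + 1) (by omega)
  omega

/-- Reversing the order of the low labels and that of the high labels replaces each edge label `d`
by `n + 1 - d`. -/
theorem IsAlphaSeq.inverse (h : IsAlphaSeq n c f) :
    IsAlphaSeq n c fun j => if f j < c then c - 1 - f j else n + c - f j := by
  set g : ℕ → ℕ := fun j => if f j < c then c - 1 - f j else n + c - f j with hg
  have g_eq : ∀ j ≤ n, (f j < c ∧ g j + f j + 1 = c) ∨ (c ≤ f j ∧ g j + f j = n + c) := by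
    intro j hj
    have := h.le j hj
    simp only [hg]
    split_ifs <;> omega
  have dist_add : ∀ j < n,
      Nat.dist (g j) (g (j + 1)) + Nat.dist (f j) (f (j + 1)) = n + 1 := by
    intro j hj
    have := h.le j hj.le
    have := h.le (j + 1) hj
    have := h.crosses j hj
    have := g_eq j hj.le
    have := g_eq (j + 1) hj
    unfold Nat.dist
    omega
  refine ⟨⟨fun j hj => ?_, fun j hj k hk e => ?_, fun j hj k hk e => ?_⟩,
    h.threshold_le, fun j hj => ?_⟩
  · have := h.threshold_le
    have := g_eq j hj
    omega
  · have := h.le j hj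
    have := h.le k hk
    have := g_eq j hj
    have := g_eq k hk
    exact h.inj j hj k hk (by omega)
  · have := dist_add j hj
    have := dist_add k hk
    exact h.dist_inj j hj k hk (by omega)
  · have := h.le j hj.le
    have := h.le (j + 1) hj
    have := h.crosses j hj
    have := g_eq j hj.le
    have := g_eq (j + 1) hj
    omega

end Symmetries

section Zigzag

/-- The zigzag labeling `0, n, 1, n - 1, 2, ...` of the path with `n` edges. -/
def zigzag (n j : ℕ) : ℕ := if j % 2 = 0 then j / 2 else n - j / 2

/-- The labels `e, e + 1, e - 1, e + 2, e - 2, ...`, which label a path with `2 * e` edges, ending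
at the label `0`, or a path with `2 * e + 1` edges, ending at the label `2 * e + 1`. -/
def spiral (e j : ℕ) : ℕ := if j % 2 = 0 then e - j / 2 else e + 1 + j / 2

theorem dist_zigzag {n j : ℕ} (hj : j < n) :
    Nat.dist (zigzag n j) (zigzag n (j + 1)) = n - j := by
  grind [zigzag, Nat.dist]

theorem dist_spiral {e j : ℕ} (hj : j ≤ 2 * e) :
    Nat.dist (spiral e j) (spiral e (j + 1)) = j + 1 := by
  grind [spiral, Nat.dist]

theorem isAlphaSeq_zigzag (n : ℕ) : IsAlphaSeq n (n / 2 + 1) (zigzag n) := by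
  refine ⟨⟨by grind [zigzag], by grind [zigzag], fun j hj k hk e => ?_⟩, by omega,
    by grind [zigzag]⟩
  rw [dist_zigzag hj, dist_zigzag hk] at e
  omega

theorem isAlphaSeq_spiral {n e : ℕ} (h : n = 2 * e ∨ n = 2 * e + 1) :
    IsAlphaSeq n (e + 1) (spiral e) := by
  refine ⟨⟨by grind [spiral], by grind [spiral], fun j hj k hk e => ?_⟩, by omega,
    by grind [spiral]⟩
  rw [dist_spiral (by omega), dist_spiral (by omega)] at e
  omega

theorem spiral_zero (e : ℕ) : spiral e 0 = e := by simp [spiral]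

theorem spiral_two_mul (e : ℕ) : spiral e (2 * e) = 0 := by simp [spiral]

theorem spiral_two_mul_add_one (e : ℕ) : spiral e (2 * e + 1) = 2 * e + 1 := by
  grind [spiral]

end Zigzag

section Nest

variable {a m c d j : ℕ} {A B : ℕ → ℕ}

/-- The labels of a path made of an outer path with `a` edges, labeled by `A`, a joining edge, and
an inner path with `m` edges, labeled by `B`. The labels `A j ≥ c` are raised by `m + 1`, and the
labels of the inner path fill the gap `{c, ..., c + m}` so created. -/
def nest (a m c : ℕ) (A B : ℕ → ℕ) (j : ℕ) : ℕ :=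
  if j ≤ a then (if A j < c then A j else A j + m + 1) else c + B (j - a - 1)

theorem nest_of_lt (hj : j ≤ a) (h : A j < c) : nest a m c A B j = A j := by
  simp [nest, hj, h]

theorem nest_of_le (hj : j ≤ a) (h : c ≤ A j) : nest a m c A B j = A j + m + 1 := by
  simp [nest, hj, h.not_gt]

theorem nest_add (k : ℕ) : nest a m c A B (a + 1 + k) = c + B k := by
  simp [nest, show ¬ a + 1 + k ≤ a by omega, show a + 1 + k - a - 1 = k by omega]

theorem nest_outer (hj : j ≤ a) :
    (A j < c ∧ nest a m c A B j = A j) ∨ (c ≤ A j ∧ nest a m c A B j = A j + m + 1) :=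
  (lt_or_ge (A j) c).imp (fun h => ⟨h, nest_of_lt hj h⟩) fun h => ⟨h, nest_of_le hj h⟩

theorem dist_nest_inner (k : ℕ) :
    Nat.dist (nest a m c A B (a + 1 + k)) (nest a m c A B (a + 1 + k + 1)) =
      Nat.dist (B k) (B (k + 1)) := by
  rw [nest_add, add_assoc, nest_add, Nat.dist_add_add_left]

theorem IsGracefulSeq.dist_le (hB : IsGracefulSeq m B) (hj : j < m) :
    Nat.dist (B j) (B (j + 1)) ≤ m := by
  have := hB.le j hj.le
  have := hB.le (j + 1) hj
  unfold Nat.dist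
  omega

theorem IsAlphaSeq.dist_pos (hA : IsAlphaSeq a c A) (hj : j < a) :
    0 < Nat.dist (A j) (A (j + 1)) := by
  have := hA.crosses j hj
  unfold Nat.dist
  omega

theorem IsAlphaSeq.dist_nest_outer (hA : IsAlphaSeq a c A) (hj : j < a) :
    Nat.dist (nest a m c A B j) (nest a m c A B (j + 1)) =
      Nat.dist (A j) (A (j + 1)) + m + 1 := by
  have := hA.crosses j hj
  have := nest_outer (m := m) (c := c) (A := A) (B := B) hj.le
  have := nest_outer (m := m) (c := c) (A := A) (B := B) (j := j + 1) hj
  unfold Nat.dist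
  omega

theorem dist_nest_join
    (hjoin : (A a < c ∧ c + B 0 = A a + m + 1) ∨ (c ≤ A a ∧ A a = c + B 0)) :
    Nat.dist (nest a m c A B a) (nest a m c A B (a + 1)) = m + 1 := by
  have := nest_outer (m := m) (c := c) (A := A) (B := B) (le_refl a)
  have : nest a m c A B (a + 1) = c + B 0 := nest_add 0
  unfold Nat.dist
  omega

theorem IsAlphaSeq.nest_inj (hA : IsAlphaSeq a c A) (hB : IsGracefulSeq m B) :
    ∀ j ≤ a + m + 1, ∀ k ≤ a + m + 1, nest a m c A B j = nest a m c A B k → j = k := by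
  intro j hj k hk e
  wlog hjk : j ≤ k generalizing j k
  · exact (this k hk j hj e.symm (by omega)).symm
  obtain hka | ⟨k, rfl⟩ := (le_or_gt k a).imp_right Nat.exists_eq_add_of_le <;>
    obtain hja | ⟨j, rfl⟩ := (le_or_gt j a).imp_right Nat.exists_eq_add_of_le
  · have := nest_outer (m := m) (c := c) (A := A) (B := B) hja
    have := nest_outer (m := m) (c := c) (A := A) (B := B) hka
    have := hA.le j hja
    have := hA.le k hka
    exact hA.inj j hja k hka (by omega)
  · omega
  · have := nest_outer (m := m) (c := c) (A := A) (B := B) hja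
    have := hB.le k (by omega)
    rw [Nat.succ_eq_add_one, nest_add] at e
    omega
  · rw [Nat.succ_eq_add_one, nest_add, nest_add] at e
    rw [hB.inj j (by omega) k (by omega) (by omega)]

theorem IsAlphaSeq.dist_nest_inj (hA : IsAlphaSeq a c A) (hB : IsGracefulSeq m B)
    (hjoin : (A a < c ∧ c + B 0 = A a + m + 1) ∨ (c ≤ A a ∧ A a = c + B 0)) :
    ∀ j < a + m + 1, ∀ k < a + m + 1,
      Nat.dist (nest a m c A B j) (nest a m c A B (j + 1)) =
        Nat.dist (nest a m c A B k) (nest a m c A B (k + 1)) → j = k := by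
  intro j hj k hk e
  have dist_cases : ∀ j < a + m + 1,
      (j < a ∧ Nat.dist (nest a m c A B j) (nest a m c A B (j + 1)) =
        Nat.dist (A j) (A (j + 1)) + m + 1 ∧ 0 < Nat.dist (A j) (A (j + 1))) ∨
      (j = a ∧ Nat.dist (nest a m c A B j) (nest a m c A B (j + 1)) = m + 1) ∨
      ∃ l < m, j = a + 1 + l ∧ Nat.dist (nest a m c A B j) (nest a m c A B (j + 1)) =
        Nat.dist (B l) (B (l + 1)) ∧ Nat.dist (B l) (B (l + 1)) ≤ m := by
    intro j hj
    obtain hja | rfl | hja := lt_trichotomy j a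
    · exact .inl ⟨hja, hA.dist_nest_outer hja, hA.dist_pos hja⟩
    · exact .inr (.inl ⟨rfl, dist_nest_join hjoin⟩)
    · obtain ⟨l, rfl⟩ := Nat.exists_eq_add_of_le hja
      have hl : l < m := by omega
      exact .inr (.inr ⟨l, hl, rfl, dist_nest_inner l, hB.dist_le hl⟩)
  obtain ⟨hja, ej, _⟩ | ⟨rfl, ej⟩ | ⟨j, hjm, rfl, ej, _⟩ := dist_cases j hj <;>
    obtain ⟨hka, ek, _⟩ | ⟨rfl, ek⟩ | ⟨k, hkm, rfl, ek, _⟩ := dist_cases k hk <;>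
    try omega
  · exact hA.dist_inj j hja k hka (by omega)
  · rw [hB.dist_inj j hjm k hkm (by omega)]

/-- The outer edges get the labels above `m + 1`, the joining edge gets `m + 1`, and the inner edges
get the labels below. -/
theorem IsAlphaSeq.isGracefulSeq_nest (hA : IsAlphaSeq a c A) (hB : IsGracefulSeq m B)
    (hjoin : (A a < c ∧ c + B 0 = A a + m + 1) ∨ (c ≤ A a ∧ A a = c + B 0)) :
    IsGracefulSeq (a + m + 1) (nest a m c A B) := by
  refine ⟨fun j hj => ?_, hA.nest_inj hB, hA.dist_nest_inj hB hjoin⟩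
  have := hA.threshold_le
  obtain hja | ⟨j, rfl⟩ := (le_or_gt j a).imp_right Nat.exists_eq_add_of_le
  · have := hA.le j hja
    have := nest_outer (m := m) (c := c) (A := A) (B := B) hja
    omega
  · have := hB.le j (by omega)
    rw [Nat.succ_eq_add_one, nest_add]
    omega

theorem IsAlphaSeq.isAlphaSeq_nest (hA : IsAlphaSeq a c A) (hB : IsAlphaSeq m d B)
    (hjoin : (A a < c ∧ c + B 0 = A a + m + 1 ∧ d ≤ B 0) ∨
      (c ≤ A a ∧ A a = c + B 0 ∧ B 0 < d)) :
    IsAlphaSeq (a + m + 1) (c + d) (nest a m c A B) := by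
  have := hA.threshold_le
  have := hB.threshold_le
  refine ⟨hA.isGracefulSeq_nest hB.toIsGracefulSeq (by omega), by omega, fun j hj => ?_⟩
  obtain hja | rfl | hja := lt_trichotomy j a
  · have := hA.crosses j hja
    have := nest_outer (m := m) (c := c) (A := A) (B := B) hja.le
    have := nest_outer (m := m) (c := c) (A := A) (B := B) (j := j + 1) hja
    omega
  · have := nest_outer (m := m) (c := c) (A := A) (B := B) (le_refl j)
    have : nest j m c A B (j + 1) = c + B 0 := nest_add 0
    omega
  · obtain ⟨k, rfl⟩ := Nat.exists_eq_add_of_le hja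
    have := hB.crosses k (by omega)
    rw [Nat.succ_eq_add_one, nest_add, add_assoc, nest_add]
    omega

end Nest

section Blocks

variable {a c d e m n : ℕ} {A B g : ℕ → ℕ}

theorem IsGracefulSeq.exists_spiral_prefix_even (hB : IsGracefulSeq m B) (h : B 0 + e = m) :
    ∃ f, IsGracefulSeq (2 * e + m + 1) f ∧ f 0 = e := by
  refine ⟨nest (2 * e) m (e + 1) (spiral e) B,
    (isAlphaSeq_spiral (.inl rfl)).isGracefulSeq_nest hB (.inl ?_), ?_⟩
  · rw [spiral_two_mul]
    omega
  · rw [nest_of_lt (Nat.zero_le _)] <;> simp [spiral_zero]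

theorem IsAlphaSeq.exists_spiral_prefix_even (hB : IsAlphaSeq m d B) (h : B 0 + e = m)
    (hd : d ≤ B 0) : ∃ f, IsAlphaSeq (2 * e + m + 1) (e + 1 + d) f ∧ f 0 = e := by
  refine ⟨nest (2 * e) m (e + 1) (spiral e) B,
    (isAlphaSeq_spiral (.inl rfl)).isAlphaSeq_nest hB (.inl ?_), ?_⟩
  · rw [spiral_two_mul]
    omega
  · rw [nest_of_lt (Nat.zero_le _)] <;> simp [spiral_zero]

theorem IsGracefulSeq.exists_spiral_prefix_odd (hB : IsGracefulSeq m B) (h : B 0 = e) :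
    ∃ f, IsGracefulSeq (2 * e + 1 + m + 1) f ∧ f 0 = e ∧
      ∀ j, f (2 * e + 1 + 1 + j) = e + 1 + B j := by
  refine ⟨nest (2 * e + 1) m (e + 1) (spiral e) B,
    (isAlphaSeq_spiral (.inr rfl)).isGracefulSeq_nest hB (.inr ?_), ?_, nest_add⟩
  · rw [spiral_two_mul_add_one]
    omega
  · rw [nest_of_lt (Nat.zero_le _)] <;> simp [spiral_zero]

theorem IsAlphaSeq.exists_spiral_prefix_odd (hB : IsAlphaSeq m d B) (h : B 0 = e)
    (hd : e < d) :
    ∃ f, IsAlphaSeq (2 * e + 1 + m + 1) (e + 1 + d) f ∧ f 0 = e ∧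
      ∀ j, f (2 * e + 1 + 1 + j) = e + 1 + B j := by
  refine ⟨nest (2 * e + 1) m (e + 1) (spiral e) B,
    (isAlphaSeq_spiral (.inr rfl)).isAlphaSeq_nest hB (.inr ?_), ?_, nest_add⟩
  · rw [spiral_two_mul_add_one]
    omega
  · rw [nest_of_lt (Nat.zero_le _)] <;> simp [spiral_zero]

/-- The excluded case is a genuine exception, found by Rosa: adding up the edge labels shows that
for `n = 4 * e` the two end labels have the sum `2 * e`, so that both would be `e`. -/
theorem exists_isAlphaSeq_start (n e : ℕ) (he : e ≤ n / 2) (hne : ¬(n = 4 * e ∧ 0 < e)) :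
    ∃ f, IsAlphaSeq n (n / 2 + 1) f ∧ f 0 = e := by
  induction n using Nat.strong_induction_on generalizing e with
  | _ n ih =>
  have start_small : ∀ e, 4 * e < n ∨ e = 0 → ∃ f, IsAlphaSeq n (n / 2 + 1) f ∧ f 0 = e := by
    intro e he
    obtain rfl | he_pos := Nat.eq_zero_or_pos e
    · exact ⟨zigzag n, isAlphaSeq_zigzag n, by simp [zigzag]⟩
    obtain hn | hn := eq_or_ne n (6 * e + 1)
    · obtain ⟨m, rfl⟩ : ∃ m, n = 2 * e + 1 + m + 1 := ⟨n - (2 * e + 2), by omega⟩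
      obtain ⟨f, hf, f_zero⟩ := ih m (by omega) e (by omega) (by omega)
      obtain ⟨F, hF, F_zero, -⟩ := hf.exists_spiral_prefix_odd f_zero (by omega)
      exact ⟨F, by convert hF using 1; omega, F_zero⟩
    · obtain ⟨m, rfl⟩ : ∃ m, n = 2 * e + m + 1 := ⟨n - (2 * e + 1), by omega⟩
      obtain ⟨f, hf, f_zero⟩ := ih m (by omega) e (by omega) (by omega)
      obtain ⟨F, hF, F_zero⟩ :=
        hf.complement.exists_spiral_prefix_even (e := e) (by omega) (by omega)
      exact ⟨F, by convert hF using 1; omega, F_zero⟩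
  by_cases h : 4 * e < n ∨ e = 0
  · exact start_small e h
  · obtain ⟨f, hf, f_zero⟩ := start_small (n / 2 - e) (by omega)
    refine ⟨_, hf.inverse, ?_⟩
    simp only [f_zero]
    split_ifs <;> omega

theorem exists_isGracefulSeq_start (he : e ≤ n) : ∃ f, IsGracefulSeq n f ∧ f 0 = e := by
  wlog h : e ≤ n / 2 generalizing e
  · obtain ⟨f, hf, f_zero⟩ := this (Nat.sub_le n e) (by omega)
    exact ⟨_, hf.complement, by omega⟩
  by_cases hne : n = 4 * e ∧ 0 < e
  · obtain ⟨f, hf, f_zero⟩ := exists_isAlphaSeq_start (2 * e - 1) (e - 1) (by omega) (by omega)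
    obtain ⟨F, hF, F_zero⟩ := hf.toIsGracefulSeq.exists_spiral_prefix_even (e := e) (by omega)
    exact ⟨F, by convert hF using 1; omega, F_zero⟩
  · obtain ⟨f, hf, f_zero⟩ := exists_isAlphaSeq_start n e h hne
    exact ⟨f, hf.toIsGracefulSeq, f_zero⟩

theorem exists_isAlphaSeq_end {b y : ℕ} (hy : y ≤ 2 * b + 1) :
    ∃ A, IsAlphaSeq (2 * b + 1) (b + 1) A ∧ A (2 * b + 1) = y := by
  wlog h : y ≤ b generalizing y
  · obtain ⟨A, hA, A_end⟩ := this (y := 2 * b + 1 - y) (by omega) (by omega)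
    refine ⟨fun j => 2 * b + 1 - A j, ?_, by simp only; omega⟩
    convert hA.complement using 1
    omega
  obtain ⟨A, hA, A_zero⟩ := exists_isAlphaSeq_start (2 * b + 1) y (by omega) (by omega)
  refine ⟨fun j => A (2 * b + 1 - j), ?_, by simpa using A_zero⟩
  convert hA.reverse using 1
  omega

theorem IsGracefulSeq.exists_prefix (hg : IsGracefulSeq m g) (h : g 0 < c ∨ m < g 0 + c) :
    ∃ f, IsGracefulSeq (2 * c + m) f ∧ ∀ j, f (2 * c + j) = c + g j := by
  have := hg.le 0 (Nat.zero_le m)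
  obtain ⟨b, rfl⟩ : ∃ b, c = b + 1 := ⟨c - 1, by omega⟩
  obtain ⟨A, hA, A_end⟩ : ∃ A, IsAlphaSeq (2 * b + 1) (b + 1) A ∧
      ((A (2 * b + 1) < b + 1 ∧ b + 1 + g 0 = A (2 * b + 1) + m + 1) ∨
        (b + 1 ≤ A (2 * b + 1) ∧ A (2 * b + 1) = b + 1 + g 0)) := by
    obtain h | h := h
    · obtain ⟨A, hA, A_end⟩ := exists_isAlphaSeq_end (b := b) (y := b + 1 + g 0) (by omega)
      exact ⟨A, hA, by omega⟩
    · obtain ⟨A, hA, A_end⟩ := exists_isAlphaSeq_end (b := b) (y := b + g 0 - m) (by omega)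
      exact ⟨A, hA, by omega⟩
  refine ⟨nest (2 * b + 1) m (b + 1) A g, ?_, fun j => nest_add j⟩
  convert hA.isGracefulSeq_nest hg A_end using 1
  omega

theorem IsAlphaSeq.exists_prefix (hB : IsAlphaSeq m d B)
    (h : (B 0 < d ∧ B 0 < c) ∨ (d ≤ B 0 ∧ m < B 0 + c)) :
    ∃ f, IsAlphaSeq (2 * c + m) (c + d) f ∧ ∀ j, f (2 * c + j) = c + B j := by
  have := hB.le 0 (Nat.zero_le m)
  obtain ⟨b, rfl⟩ : ∃ b, c = b + 1 := ⟨c - 1, by omega⟩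
  obtain ⟨A, hA, A_end⟩ : ∃ A, IsAlphaSeq (2 * b + 1) (b + 1) A ∧
      ((A (2 * b + 1) < b + 1 ∧ b + 1 + B 0 = A (2 * b + 1) + m + 1 ∧ d ≤ B 0) ∨
        (b + 1 ≤ A (2 * b + 1) ∧ A (2 * b + 1) = b + 1 + B 0 ∧ B 0 < d)) := by
    obtain h | h := h
    · obtain ⟨A, hA, A_end⟩ := exists_isAlphaSeq_end (b := b) (y := b + 1 + B 0) (by omega)
      exact ⟨A, hA, by omega⟩
    · obtain ⟨A, hA, A_end⟩ := exists_isAlphaSeq_end (b := b) (y := b + B 0 - m) (by omega)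
      exact ⟨A, hA, by omega⟩
  refine ⟨nest (2 * b + 1) m (b + 1) A B, ?_, fun j => nest_add j⟩
  convert hA.isAlphaSeq_nest hB A_end using 1
  omega

theorem IsAlphaSeq.exists_extension (hA : IsAlphaSeq a c A) (hlow : c ≤ A a + m + 1)
    (hhigh : A a ≤ c + m) :
    ∃ f, IsGracefulSeq (a + m + 1) f ∧ (∀ j ≤ a, A j < c → f j = A j) ∧
      (∀ j ≤ a, c ≤ A j → f j = A j + m + 1) ∧ (A a < c → f (a + 1) = A a + m + 1) := by
  obtain ⟨B, hB, B_zero⟩ := exists_isGracefulSeq_start (n := m)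
    (e := if A a < c then A a + m + 1 - c else A a - c) (by split_ifs <;> omega)
  refine ⟨nest a m c A B, hA.isGracefulSeq_nest hB (by grind), fun j hj => nest_of_lt hj,
    fun j hj => nest_of_le hj, fun h => ?_⟩
  rw [if_pos h] at B_zero
  have : nest a m c A B (a + 1) = c + B 0 := nest_add 0
  omega

end Blocks

section Attractive

variable {i k l n r u : ℕ}

/-- The vertex `u` (counted from one end, starting at `0`) of the path with `n` edges is
`i`-attractive. -/
def PathAttractive (n u i : ℕ) : Prop := ∃ f, IsGracefulSeq n f ∧ f u = i

theorem PathAttractive.complement (h : PathAttractive n u i) : PathAttractive n u (n - i) := by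
  obtain ⟨f, hf, rfl⟩ := h
  exact ⟨_, hf.complement, rfl⟩

theorem PathAttractive.reverse (h : PathAttractive n u i) (hu : u ≤ n) :
    PathAttractive n (n - u) i := by
  obtain ⟨f, hf, rfl⟩ := h
  exact ⟨_, hf.reverse, by rw [Nat.sub_sub_self hu]⟩

theorem PathAttractive.of_reverse (h : PathAttractive n (n - u) i) (hu : u ≤ n) :
    PathAttractive n u i := by
  simpa [Nat.sub_sub_self hu] using h.reverse (Nat.sub_le n u)

theorem PathAttractive.of_complement (h : PathAttractive n u (n - i)) (hi : i ≤ n) :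
    PathAttractive n u i := by
  simpa [Nat.sub_sub_self hi] using h.complement

theorem exists_isGracefulSeq_eq_zigzag {a : ℕ} (h : a + a / 2 + 1 ≤ n) :
    ∃ f, IsGracefulSeq n f ∧ ∀ j ≤ a, f j = zigzag n (a - j) := by
  obtain ⟨m, rfl⟩ : ∃ m, n = a + m + 1 := ⟨n - a - 1, by omega⟩
  have end_eq : zigzag a (a - a) = 0 := by simp [zigzag]
  obtain ⟨f, hf, low, high, -⟩ :=
    (isAlphaSeq_zigzag a).reverse.exists_extension (m := m) (by omega) (by omega)
  refine ⟨f, hf, fun j hj => ?_⟩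
  have := low j hj
  have := high j hj
  unfold zigzag at *
  split_ifs at * <;> omega

theorem exists_isAlphaSeq_eq_add_zigzag {c : ℕ} (h : l / 2 < c) :
    ∃ f, IsAlphaSeq (2 * c + l) (c + (l / 2 + 1)) f ∧ ∀ j ≤ l, f j = c + zigzag l j := by
  have start_cases : zigzag l (l - 0) < l / 2 + 1 ∧ zigzag l (l - 0) < c ∨
      l / 2 + 1 ≤ zigzag l (l - 0) ∧ l < zigzag l (l - 0) + c := by
    unfold zigzag
    split_ifs <;> omega
  obtain ⟨f, hf, f_add⟩ := (isAlphaSeq_zigzag l).reverse.exists_prefix start_cases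
  refine ⟨_, hf.reverse, fun j hj => ?_⟩
  rw [Nat.add_sub_assoc hj, f_add, Nat.sub_sub_self hj]

theorem pathAttractive_of_three_mul_add_le (h : 3 * i + r + r / 2 + 1 ≤ n) :
    PathAttractive n r i := by
  obtain ⟨f, hf, f_eq⟩ := exists_isGracefulSeq_eq_zigzag (n := n) (a := r + 2 * i) (by omega)
  refine ⟨f, hf, ?_⟩
  rw [f_eq r (by omega), Nat.add_sub_cancel_left]
  simp [zigzag]

theorem pathAttractive_of_lt_four_mul (hlow : n + 4 * (r / 2) < 4 * i)
    (hhigh : r + 2 * i ≤ n + 2 * (r / 2)) : PathAttractive n r i := by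
  obtain ⟨c, rfl⟩ : ∃ c, i = c + r / 2 := ⟨i - r / 2, by omega⟩
  obtain ⟨l, rfl⟩ : ∃ l, n = 2 * c + l := ⟨n - 2 * c, by omega⟩
  obtain ⟨f, hf, f_eq⟩ := exists_isAlphaSeq_eq_add_zigzag (l := l) (c := c) (by omega)
  have f_r := f_eq r (by omega)
  unfold zigzag at f_r
  split_ifs at f_r
  · exact ⟨f, hf.toIsGracefulSeq, f_r⟩
  · exact ⟨_, hf.complement.toIsGracefulSeq, by omega⟩

theorem pathAttractive_of_three_mul_add_mod_le (hlow : 2 * (r / 2) < i)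
    (hhigh : 3 * i + r % 2 + 1 ≤ n) : PathAttractive n r i := by
  obtain ⟨c, rfl⟩ : ∃ c, i = c + r / 2 := ⟨i - r / 2, by omega⟩
  obtain ⟨g, hg, g_r⟩ : ∃ g, IsAlphaSeq (2 * c + r) (c + r / 2 + 1) g ∧ g r = c + r / 2 := by
    obtain ⟨g, hg, g_eq⟩ := exists_isAlphaSeq_eq_add_zigzag (l := r) (c := c) (by omega)
    have g_r := g_eq r le_rfl
    unfold zigzag at g_r
    split_ifs at g_r
    · exact ⟨g, hg, g_r⟩
    · refine ⟨fun j => 2 * c + r - g j, ?_, by simp only; omega⟩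
      convert hg.complement using 1
      omega
  obtain ⟨m, rfl⟩ : ∃ m, n = 2 * c + r + m + 1 := ⟨n - (2 * c + r + 1), by omega⟩
  have := hg.le (2 * c + r) le_rfl
  obtain ⟨f, hf, low, -, -⟩ := hg.exists_extension (m := m) (by omega) (by omega)
  exact ⟨f, hf, by rw [low r (by omega) (by omega), g_r]⟩

theorem pathAttractive_of_le_half (hlow : i ≤ r / 2) (hhigh : r + r / 2 < n + i)
    (hne : ¬(r = 4 * i ∧ 0 < i)) : PathAttractive n r i := by
  obtain ⟨A, hA, A_zero⟩ := exists_isAlphaSeq_start r i hlow hne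
  obtain ⟨m, rfl⟩ : ∃ m, n = r + m + 1 := ⟨n - r - 1, by omega⟩
  have A_end : A (r - r) = i := by simpa using A_zero
  obtain ⟨f, hf, low, -, -⟩ := hA.reverse.exists_extension (m := m) (by omega) (by omega)
  exact ⟨f, hf, by rw [low r le_rfl (by omega), A_end]⟩

theorem pathAttractive_of_half_le (hlow : r / 2 ≤ i) (hir : i < r)
    (hhigh : i + (r - 1) / 2 < n) (hne : ∀ k > 0, ¬(r = 4 * k + 1 ∧ i = 3 * k)) :
    PathAttractive n r i := by
  obtain ⟨a, rfl⟩ : ∃ a, r = a + 1 := ⟨r - 1, by omega⟩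
  have := hne (a - i)
  obtain ⟨A, hA, A_zero⟩ := exists_isAlphaSeq_start a (a - i) (by omega) (by omega)
  obtain ⟨m, rfl⟩ : ∃ m, n = a + m + 1 := ⟨n - a - 1, by omega⟩
  have A_end : A (a - a) = a - i := by simpa using A_zero
  obtain ⟨f, hf, -, -, f_succ⟩ := hA.reverse.exists_extension (m := m) (by omega) (by omega)
  have := f_succ (by omega)
  exact ⟨_, hf.complement, by omega⟩

theorem exists_isGracefulSeq_zero_one (hk : 0 < k) (hkn : 2 * k < n) (hne : ¬(k = 1 ∧ n = 4)) :
    ∃ f, IsGracefulSeq n f ∧ f 0 = n - k ∧ f 1 = k := by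
  obtain h | h : 3 * k + 2 ≤ n ∨ n < 4 * k := by omega
  · obtain ⟨f, hf, f_eq⟩ := exists_isGracefulSeq_eq_zigzag (n := n) (a := 2 * k + 1) (by omega)
    refine ⟨f, hf, ?_, ?_⟩
    · rw [f_eq 0 (by omega)]
      grind [zigzag]
    · rw [f_eq 1 (by omega)]
      simp [zigzag]
  · obtain ⟨l, rfl⟩ : ∃ l, n = 2 * k + l := ⟨n - 2 * k, by omega⟩
    obtain ⟨f, hf, f_eq⟩ := exists_isAlphaSeq_eq_add_zigzag (l := l) (c := k) (by omega)
    have f_zero : f 0 = k := by simpa [zigzag] using f_eq 0 (by omega)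
    have f_one : f 1 = k + l := by simpa [zigzag] using f_eq 1 (by omega)
    exact ⟨_, hf.complement.toIsGracefulSeq, by omega, by omega⟩

theorem PathAttractive.two_mul_add {c : ℕ} (h : PathAttractive n u i) (hc : n < 2 * c) :
    PathAttractive (2 * c + n) (2 * c + u) (c + i) := by
  obtain ⟨g, hg, rfl⟩ := h
  have := hg.le 0 (Nat.zero_le n)
  obtain ⟨f, hf, f_add⟩ := hg.exists_prefix (c := c) (by omega)
  exact ⟨f, hf, f_add u⟩

end Attractive

section SpecialCases

variable {h k n : ℕ}

theorem pathAttractive_four_mul_add_one_three_mul (hk : 0 < k) (hkn : 6 * k ≤ n) (hn : 8 ≤ n) :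
    PathAttractive n (4 * k + 1) (3 * k) := by
  by_cases h_sporadic : n = 8 ∧ k = 1
  · obtain ⟨rfl, rfl⟩ := h_sporadic
    exact ⟨([7, 0, 8, 2, 4, 3, 6, 1, 5].getD · 0), ⟨by decide, by decide, by decide⟩, rfl⟩
  obtain rfl | h_lt := eq_or_lt_of_le hkn
  · obtain rfl | hk3 := eq_or_ne k 3
    · have : PathAttractive 8 (8 - 5) 4 :=
        (pathAttractive_of_half_le (by omega) (by omega) (by omega) (by omega)).reverse (by omega)
      exact this.two_mul_add (c := 5) (by omega)
    · have : PathAttractive (2 * k) 1 k :=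
        (pathAttractive_of_half_le (by omega) (by omega) (by omega) (by omega)).of_reverse
          (by omega)
      convert this.two_mul_add (c := 2 * k) (by omega) using 1 <;> omega
  · obtain ⟨m, rfl⟩ : ∃ m, n = 2 * (2 * k) + m := ⟨n - 4 * k, by omega⟩
    obtain ⟨g, hg, g_zero, g_one⟩ :=
      exists_isGracefulSeq_zero_one (n := m) hk (by omega) (by omega)
    obtain ⟨f, hf, f_add⟩ := hg.exists_prefix (c := 2 * k) (by omega)
    have := f_add 1
    exact ⟨f, hf, by rw [show 4 * k + 1 = 2 * (2 * k) + 1 by ring]; omega⟩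

theorem exists_isAlphaSeq_one_end_add_two_le (hk : k = 2 ∨ 4 ≤ k) :
    ∃ w, IsAlphaSeq (2 * k - 2) k w ∧ w 0 = 1 ∧ w (2 * k - 2) + 2 ≤ k := by
  induction k using Nat.strong_induction_on with
  | _ k ih =>
  obtain rfl | rfl | hk' : k = 2 ∨ k = 5 ∨ k - 2 = 2 ∨ 4 ≤ k - 2 := by omega
  · exact ⟨([1, 2, 0].getD · 0), ⟨⟨by decide, by decide, by decide⟩, by decide, by decide⟩,
      by decide, by decide⟩
  · exact ⟨([1, 6, 2, 8, 0, 7, 4, 5, 3].getD · 0),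
      ⟨⟨by decide, by decide, by decide⟩, by decide, by decide⟩, by decide, by decide⟩
  · obtain ⟨k, rfl⟩ : ∃ l, k = l + 3 := ⟨k - 3, by omega⟩
    obtain ⟨B, hB, B_zero, B_end⟩ := ih (k + 1) (by omega) (by omega)
    obtain ⟨w, hw, w_zero, w_add⟩ := hB.exists_spiral_prefix_odd B_zero (by omega)
    refine ⟨w, ?_, w_zero, ?_⟩
    · convert hw using 1 <;> omega
    · have := w_add (2 * (k + 1) - 2)
      rw [show 2 * (k + 3) - 2 = 2 * 1 + 1 + 1 + (2 * (k + 1) - 2) by omega]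
      omega

theorem exists_isAlphaSeq_four_mul_eq (hk : 2 ≤ k) :
    ∃ f, IsAlphaSeq (4 * k + 1) (2 * k + 1) f ∧ f (4 * k) = k := by
  obtain rfl | hk3 := eq_or_ne k 3
  · exact ⟨([2, 11, 4, 12, 1, 13, 0, 10, 5, 8, 6, 7, 3, 9].getD · 0),
      ⟨⟨by decide, by decide, by decide⟩, by decide, by decide⟩, by decide⟩
  obtain ⟨w, hw, w_zero, w_end⟩ := exists_isAlphaSeq_one_end_add_two_le (k := k) (by omega)
  obtain ⟨g, hg, g_one, g_end⟩ :
      ∃ g, IsAlphaSeq (2 * k + 1) (k + 1) g ∧ g 1 = 0 ∧ g (2 * k + 1) < k := by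
    have outer : IsAlphaSeq 2 1 ([1, 0, 2].getD · 0) :=
      ⟨⟨by decide, by decide, by decide⟩, by decide, by decide⟩
    have g_end := nest_add (a := 2) (m := 2 * k - 2) (c := 1) (A := ([1, 0, 2].getD · 0)) (B := w)
      (2 * k - 2)
    rw [show 2 + 1 + (2 * k - 2) = 2 * k + 1 by omega] at g_end
    refine ⟨nest 2 (2 * k - 2) 1 ([1, 0, 2].getD · 0) w, ?_,
      nest_of_lt (by decide) (by decide), by omega⟩
    convert outer.isAlphaSeq_nest hw (.inr ⟨by decide, by simp [w_zero], by omega⟩) using 1 <;>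
      omega
  have g_start : g (2 * k + 1 - 0) < k + 1 ∧ g (2 * k + 1 - 0) < k := by
    rw [Nat.sub_zero]
    omega
  obtain ⟨f, hf, f_add⟩ := hg.reverse.exists_prefix (.inl g_start)
  refine ⟨f, ?_, ?_⟩
  · convert hf using 1 <;> omega
  · rw [show 4 * k = 2 * k + 2 * k by ring, f_add, Nat.add_sub_cancel_left, g_one, add_zero]

theorem pathAttractive_eight_mul (hk : 0 < k) : PathAttractive (8 * k) (4 * k) k := by
  obtain rfl | hk2 : k = 1 ∨ 2 ≤ k := by omega
  · exact ⟨([3, 4, 2, 6, 1, 7, 0, 8, 5].getD · 0), ⟨by decide, by decide, by decide⟩, rfl⟩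
  obtain ⟨A, hA, A_eq⟩ := exists_isAlphaSeq_four_mul_eq hk2
  have := hA.le (4 * k + 1) le_rfl
  obtain ⟨f, hf, low, -, -⟩ := hA.exists_extension (m := 4 * k - 2) (by omega) (by omega)
  refine ⟨f, ?_, by rw [low _ (by omega) (by omega), A_eq]⟩
  convert hf using 1
  omega

/-- The value at `0` only serves the induction, which puts a spiral in front. -/
theorem exists_isGracefulSeq_center_end (hn : n = 5 ∨ 8 ≤ n) :
    ∃ w, IsGracefulSeq n w ∧ w 0 = 2 - n % 2 ∧ w (n - 1) = n / 2 ∧ w n = n / 2 + 2 := by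
  induction n using Nat.strong_induction_on with
  | _ n ih =>
  have := Nat.mod_two_eq_zero_or_one n
  obtain rfl | rfl | rfl | rfl | rfl | hn' : n = 5 ∨ n = 8 ∨ n = 10 ∨ n = 11 ∨ n = 12 ∨
      n - (6 - 2 * (n % 2)) = 5 ∨ 8 ≤ n - (6 - 2 * (n % 2)) := by grind
  · exact ⟨([1, 5, 0, 3, 2, 4].getD · 0), ⟨by decide, by decide, by decide⟩, by decide⟩
  · exact ⟨([2, 5, 0, 8, 1, 7, 3, 4, 6].getD · 0), ⟨by decide, by decide, by decide⟩, by decide⟩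
  · exact ⟨([2, 6, 3, 8, 1, 9, 0, 10, 4, 5, 7].getD · 0), ⟨by decide, by decide, by decide⟩,
      by decide⟩
  · exact ⟨([1, 9, 2, 11, 0, 10, 4, 8, 3, 6, 5, 7].getD · 0), ⟨by decide, by decide, by decide⟩,
      by decide⟩
  · exact ⟨([2, 7, 4, 10, 3, 11, 1, 12, 0, 9, 5, 6, 8].getD · 0),
      ⟨by decide, by decide, by decide⟩, by decide⟩
  · obtain ⟨e, he⟩ : ∃ e, e = 2 - n % 2 := ⟨_, rfl⟩
    obtain ⟨m, rfl⟩ : ∃ m, n = 2 * e + 1 + 1 + (m + 1) := ⟨n - (2 * e + 3), by omega⟩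
    obtain ⟨B, hB, B_zero, B_pred, B_end⟩ := ih (m + 1) (by omega) (by omega)
    obtain ⟨w, hw, w_zero, w_add⟩ := hB.exists_spiral_prefix_odd (e := e) (by omega)
    have w_pred := w_add m
    have w_end := w_add (m + 1)
    rw [Nat.add_sub_cancel] at B_pred
    refine ⟨w, ?_, by omega, ?_, by omega⟩
    · convert hw using 1
      omega
    · rw [← add_assoc, Nat.add_sub_cancel]
      omega

theorem pathAttractive_two_mul_self (hh : 4 ≤ h) : PathAttractive (2 * h) h h := by
  obtain rfl | rfl | hh' : h = 5 ∨ h = 6 ∨ (h + 1 = 5 ∨ 8 ≤ h + 1) := by omega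
  · exact ⟨([1, 10, 0, 8, 4, 5, 7, 2, 9, 3, 6].getD · 0), ⟨by decide, by decide, by decide⟩, rfl⟩
  · exact ⟨([1, 11, 0, 12, 3, 8, 6, 5, 9, 2, 10, 4, 7].getD · 0),
      ⟨by decide, by decide, by decide⟩, rfl⟩
  obtain ⟨w, hw, -, w_pred, w_end⟩ := exists_isGracefulSeq_center_end hh'
  obtain ⟨a, rfl⟩ : ∃ a, h = a + 2 := ⟨h - 2, by omega⟩
  have outer_end : zigzag a (a - a) = 0 := by simp [zigzag]
  refine ⟨_, ?_, (nest_add (a := a) (m := a + 2 + 1) (c := a / 2 + 1)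
    (A := fun j => zigzag a (a - j)) (B := fun j => w (a + 2 + 1 - j)) 1).trans (by omega)⟩
  convert (isAlphaSeq_zigzag a).reverse.isGracefulSeq_nest hw.reverse (.inl ⟨?_, ?_⟩) using 1
  · omega
  · omega
  · rw [Nat.sub_zero]
    omega

end SpecialCases

section EveryVertex

variable {i n r u : ℕ}

theorem pathAttractive_of_le_half_of_two_mul_le (hn : 0 < n) (hr : 2 * r ≤ n) (hi : i ≤ r / 2) :
    PathAttractive n r i := by
  by_cases hne : r = 4 * i ∧ 0 < i
  · obtain ⟨rfl, hi_pos⟩ := hne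
    obtain h | h := le_or_gt (9 * i + 1) n
    · exact pathAttractive_of_three_mul_add_le (by omega)
    obtain rfl | h' := eq_or_ne n (8 * i)
    · exact pathAttractive_eight_mul hi_pos
    · exact (pathAttractive_of_le_half (by omega) (by omega) (by omega)).of_reverse (by omega)
  · exact pathAttractive_of_le_half hi (by omega) hne

theorem pathAttractive_of_half_le_of_two_mul_le (hn : 8 ≤ n) (hlow : r / 2 ≤ i) (hir : i < r)
    (hi : 2 * i ≤ n) (hhigh : i + (r - 1) / 2 < n) : PathAttractive n r i := by
  by_cases hne : ∃ k > 0, r = 4 * k + 1 ∧ i = 3 * k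
  · obtain ⟨k, hk, rfl, rfl⟩ := hne
    exact pathAttractive_four_mul_add_one_three_mul hk (by omega) hn
  · push Not at hne
    exact pathAttractive_of_half_le hlow hir hhigh (by grind)

theorem pathAttractive_of_two_mul_le (hn : 8 ≤ n) (hr : 2 * r ≤ n) (hi : 2 * i ≤ n) :
    PathAttractive n r i := by
  obtain rfl | hr_pos := Nat.eq_zero_or_pos r
  · exact exists_isGracefulSeq_start (by omega)
  obtain hir | hir := lt_or_ge i r
  · obtain h | h := le_total i (r / 2)
    · exact pathAttractive_of_le_half_of_two_mul_le (by omega) hr h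
    · exact pathAttractive_of_half_le_of_two_mul_le hn h hir hi (by omega)
  obtain h | h := lt_or_ge n (2 * i + 3 * r)
  · obtain h' | h' := le_or_gt i ((n - r) / 2)
    · exact (pathAttractive_of_le_half h' (by omega) (by omega)).of_reverse (by omega)
    obtain h_center | h_center := le_or_gt n (i + r)
    · obtain ⟨rfl, rfl⟩ : r = i ∧ n = 2 * i := by omega
      exact pathAttractive_two_mul_self (by omega)
    · exact (pathAttractive_of_half_le_of_two_mul_le hn h'.le (by omega) hi (by omega)).of_reverse
        (by omega)
  · by_cases h5 : 2 * (r / 2) < i ∧ 3 * i + r % 2 + 1 ≤ n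
    · exact pathAttractive_of_three_mul_add_mod_le h5.1 h5.2
    obtain h3 | h3 := le_or_gt (3 * i + r + r / 2 + 1) n
    · exact pathAttractive_of_three_mul_add_le h3
    · exact pathAttractive_of_lt_four_mul (by omega) (by omega)

theorem pathAttractive_of_eight_le (hn : 8 ≤ n) (hu : u ≤ n) (hi : i ≤ n) :
    PathAttractive n u i := by
  wlog hu' : 2 * u ≤ n generalizing u
  · exact (this (Nat.sub_le n u) (by omega)).of_reverse hu
  wlog hi' : 2 * i ≤ n generalizing i
  · exact (this (Nat.sub_le n i) (by omega)).of_complement hi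
  exact pathAttractive_of_two_mul_le hn hu' hi'

end EveryVertex

section PathGraph

variable {n : ℕ} {f : ℕ → ℕ}

theorem edgeSet_pathGraph_succ (n : ℕ) :
    (SimpleGraph.pathGraph (n + 1)).edgeSet =
      Set.range fun j : Fin n => s(j.castSucc, j.succ) := by
  ext e
  induction e using Sym2.ind with
  | _ a b =>
  rw [SimpleGraph.mem_edgeSet, SimpleGraph.pathGraph_adj]
  simp only [Set.mem_range, Sym2.eq_iff, Fin.ext_iff, Fin.val_castSucc, Fin.val_succ]
  constructor
  · rintro (h | h)
    · exact ⟨⟨a, by omega⟩, .inl ⟨rfl, h⟩⟩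
    · exact ⟨⟨b, by omega⟩, .inr ⟨rfl, h⟩⟩
  · rintro ⟨j, h | h⟩ <;> omega

theorem card_edgeSet_pathGraph_succ (n : ℕ) :
    Nat.card (SimpleGraph.pathGraph (n + 1)).edgeSet = n := by
  rw [edgeSet_pathGraph_succ, Nat.card_range_of_injective, Nat.card_fin]
  intro j k h
  simp only [Sym2.eq_iff, Fin.ext_iff, Fin.val_castSucc, Fin.val_succ] at h
  omega

theorem IsGracefulSeq.range_dist (hf : IsGracefulSeq n f) :
    (Set.range fun j : Fin n => Nat.dist (f j) (f (j + 1))) = Set.Icc 1 n := by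
  have dist_injective : Function.Injective fun j : Fin n => Nat.dist (f j) (f (j + 1)) :=
    fun j k h => Fin.ext (hf.dist_inj j j.2 k k.2 h)
  refine Set.eq_of_subset_of_ncard_le ?_ ?_ (Set.finite_Icc 1 n)
  · rintro _ ⟨j, rfl⟩
    have f_ne : f j ≠ f (j + 1) := fun h => by
      have := hf.inj j (by omega) (j + 1) (by omega) h
      omega
    exact ⟨Nat.dist_pos_of_ne f_ne, hf.dist_le j.2⟩
  · rw [← Nat.card_coe_set_eq (Set.range _), Nat.card_range_of_injective dist_injective,
      Nat.card_fin, ← Finset.coe_Icc, Set.ncard_coe_finset, Nat.card_Icc]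
    omega

theorem IsGracefulSeq.isGracefulLabeling (hf : IsGracefulSeq n f) :
    IsGracefulLabeling (SimpleGraph.pathGraph (n + 1)) fun v => f v := by
  have label_eq : ∀ j : Fin n, edgeLabel (fun v : Fin (n + 1) => f v) s(j.castSucc, j.succ) =
      Nat.dist (f j) (f (j + 1)) := fun j => by simp [edgeLabel]
  unfold IsGracefulLabeling
  rw [card_edgeSet_pathGraph_succ, edgeSet_pathGraph_succ]
  refine ⟨fun a b h => Fin.ext (hf.inj a (by omega) b (by omega) h),
    fun v => hf.le v (by omega), ?_, ?_⟩
  · rintro _ ⟨j, rfl⟩ _ ⟨k, rfl⟩ h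
    simp only [label_eq] at h
    rw [Fin.ext (hf.dist_inj j j.2 k k.2 h)]
  · rw [← Set.range_comp, ← hf.range_dist]
    exact congrArg Set.range (funext label_eq)

end PathGraph

/-- For the path `P` with `n ≥ 8` edges (`n + 1` vertices), every vertex
`u` and every `i` with `0 ≤ i ≤ n` admit a graceful labeling `α` of `P` with `α u = i`. -/
theorem pathGraph_every_vertex_attractive (n : ℕ) (hn : 8 ≤ n)
    (u : Fin (n + 1)) (i : ℕ) (hi : i ≤ n) :
    ∃ α : Fin (n + 1) → ℕ,
      IsGracefulLabeling (SimpleGraph.pathGraph (n + 1)) α ∧ α u = i := by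
  obtain ⟨f, hf, hfu⟩ := pathAttractive_of_eight_le hn (Nat.le_of_lt_succ u.2) hi
  exact ⟨_, hf.isGracefulLabeling, hfu⟩
end

section
/- Every finite simple graph G can be embedded into a graceful graph; that is, for every finite simple graph G there exists a graceful graph H containing a subgraph isomorphic to G. -/
/-!
Suppose the vertices of a graph are distinct numbers in `{0, ..., q}` and no two edges have the
same difference. Take all of `{0, ..., q}` as vertex set and, for each `d ∈ {1, ..., q}` that is
not the difference of an edge, add the edge `{0, d}`: the result is graceful. Any graph on `n`
vertices can be placed in this way on `2 ^ 0, ..., 2 ^ (n - 1)`, since the differences of distinct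
pairs of powers of two are distinct.
-/

section EdgeLabel

variable {V W : Type*}

lemma edgeLabel_mk (φ : V → ℕ) (u v : V) : edgeLabel φ s(u, v) = Nat.dist (φ u) (φ v) := rfl

lemma edgeLabel_map (φ : W → ℕ) (f : V → W) (e : Sym2 V) :
    edgeLabel φ (e.map f) = edgeLabel (φ ∘ f) e := by
  induction e using Sym2.ind with | _ u v => rfl

lemma edgeLabel_pos {φ : V → ℕ} (hφ : φ.Injective) {e : Sym2 V} (he : ¬e.IsDiag) :
    0 < edgeLabel φ e := by
  induction e using Sym2.ind with | _ u v =>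
  exact Nat.dist_pos_of_ne fun h => he (Sym2.mk_isDiag_iff.mpr (hφ h))

lemma edgeLabel_le {φ : V → ℕ} {q : ℕ} (hφ : ∀ v, φ v ≤ q) (e : Sym2 V) :
    edgeLabel φ e ≤ q := by
  induction e using Sym2.ind with | _ u v =>
  have hu := hφ u
  have hv := hφ v
  simp only [edgeLabel_mk, Nat.dist]
  omega

lemma isGracefulLabeling_of_bijOn {G : SimpleGraph V} {φ : V → ℕ} {q : ℕ}
    (hφ : φ.Injective) (hle : ∀ v, φ v ≤ q)
    (hbij : Set.BijOn (edgeLabel φ) G.edgeSet (Set.Icc 1 q)) : IsGracefulLabeling G φ := by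
  have hcard : Nat.card G.edgeSet = q := by
    simpa only [Nat.card_eq_card_toFinset, Set.toFinset_Icc, Nat.card_Icc,
      Nat.add_sub_cancel] using Nat.card_congr (hbij.equiv _)
  rw [IsGracefulLabeling, hcard]
  exact ⟨hφ, hle, hbij.injOn, hbij.image_eq⟩

end EdgeLabel

section LabelCompletion

variable {q : ℕ}

/-- The graph on `{0, ..., q}` obtained from `G` by adding, for each `d ∈ {1, ..., q}` that is
not the label of an edge of `G`, the edge `{0, d}`. It is the graceful supergraph of `G` when the
edge labels of `G` are distinct. The loop at `0`, whose label `0` never occurs in `G`, is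
discarded by `SimpleGraph.fromEdgeSet`. -/
def labelCompletion (G : SimpleGraph (Fin (q + 1))) : SimpleGraph (Fin (q + 1)) :=
  G ⊔ SimpleGraph.fromEdgeSet
    {e | 0 ∈ e ∧ edgeLabel Fin.val e ∉ edgeLabel Fin.val '' G.edgeSet}

lemma edgeLabel_val_zero (d : Fin (q + 1)) : edgeLabel Fin.val s(0, d) = d.val :=
  Nat.dist_zero_left d.val

lemma injOn_edgeLabel_val_zero_mem :
    Set.InjOn (edgeLabel Fin.val) {e : Sym2 (Fin (q + 1)) | 0 ∈ e} := by
  rintro _ ⟨c, rfl⟩ _ ⟨d, rfl⟩ h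
  rw [edgeLabel_val_zero, edgeLabel_val_zero] at h
  rw [Fin.ext h]

lemma mem_edgeSet_labelCompletion {G : SimpleGraph (Fin (q + 1))} {e : Sym2 (Fin (q + 1))} :
    e ∈ (labelCompletion G).edgeSet ↔ e ∈ G.edgeSet ∨
      (0 ∈ e ∧ edgeLabel Fin.val e ∉ edgeLabel Fin.val '' G.edgeSet) ∧ ¬e.IsDiag := by
  rw [labelCompletion, SimpleGraph.edgeSet_sup, SimpleGraph.edgeSet_fromEdgeSet]
  rfl

lemma injOn_edgeLabel_labelCompletion {G : SimpleGraph (Fin (q + 1))}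
    (hG : Set.InjOn (edgeLabel Fin.val) G.edgeSet) :
    Set.InjOn (edgeLabel Fin.val) (labelCompletion G).edgeSet := by
  intro e he e' he' h
  rw [mem_edgeSet_labelCompletion] at he he'
  rcases he with he | ⟨⟨he, hnew⟩, -⟩ <;> rcases he' with he' | ⟨⟨he', hnew'⟩, -⟩
  · exact hG he he' h
  · exact absurd ⟨e, he, h⟩ hnew'
  · exact absurd ⟨e', he', h.symm⟩ hnew
  · exact injOn_edgeLabel_val_zero_mem he he' h

lemma surjOn_edgeLabel_labelCompletion (G : SimpleGraph (Fin (q + 1))) :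
    Set.SurjOn (edgeLabel Fin.val) (labelCompletion G).edgeSet (Set.Icc 1 q) := by
  rintro d ⟨hd, hdq⟩
  by_cases hold : d ∈ edgeLabel Fin.val '' G.edgeSet
  · obtain ⟨e, he, rfl⟩ := hold
    exact ⟨e, mem_edgeSet_labelCompletion.mpr (.inl he), rfl⟩
  · let v : Fin (q + 1) := ⟨d, Nat.lt_succ_of_le hdq⟩
    have hlabel : edgeLabel Fin.val s(0, v) = d := edgeLabel_val_zero v
    have hv : ¬s(0, v).IsDiag := fun h =>
      Nat.pos_iff_ne_zero.mp hd (congrArg Fin.val (Sym2.mk_isDiag_iff.mp h)).symm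
    have hnew : edgeLabel Fin.val s(0, v) ∉ edgeLabel Fin.val '' G.edgeSet := by
      rwa [hlabel]
    exact ⟨s(0, v),
      mem_edgeSet_labelCompletion.mpr (.inr ⟨⟨Sym2.mem_mk_left 0 v, hnew⟩, hv⟩), hlabel⟩

lemma isGraceful_labelCompletion {G : SimpleGraph (Fin (q + 1))}
    (hG : Set.InjOn (edgeLabel Fin.val) G.edgeSet) : IsGraceful (labelCompletion G) := by
  have hle : ∀ v : Fin (q + 1), v.val ≤ q := Fin.is_le
  refine ⟨Fin.val, isGracefulLabeling_of_bijOn Fin.val_injective hle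
    ⟨fun e he => ⟨?_, edgeLabel_le hle e⟩, injOn_edgeLabel_labelCompletion hG,
      surjOn_edgeLabel_labelCompletion G⟩⟩
  exact edgeLabel_pos Fin.val_injective (SimpleGraph.not_isDiag_of_mem_edgeSet _ he)

theorem exists_isGraceful_of_injOn_edgeLabel {V : Type*} {G : SimpleGraph V} {φ : V → ℕ}
    (hφ : φ.Injective) (hle : ∀ v, φ v ≤ q) (hG : Set.InjOn (edgeLabel φ) G.edgeSet) :
    ∃ H : SimpleGraph (Fin (q + 1)), IsGraceful H ∧ ∃ f : G →g H, Function.Injective f := by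
  let ψ : V ↪ Fin (q + 1) :=
    ⟨fun v => ⟨φ v, Nat.lt_succ_of_le (hle v)⟩, fun _ _ h => hφ (congrArg Fin.val h)⟩
  have hmap : Set.InjOn (edgeLabel Fin.val) (G.map ψ).edgeSet := by
    rw [SimpleGraph.edgeSet_map]
    rintro _ ⟨e, he, rfl⟩ _ ⟨e', he', rfl⟩ h
    rw [Function.Embedding.sym2Map_apply, Function.Embedding.sym2Map_apply, edgeLabel_map,
      edgeLabel_map] at h
    rw [hG he he' h]
  have hcompletion : G.map ψ ≤ labelCompletion (G.map ψ) := le_sup_left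
  exact ⟨labelCompletion (G.map ψ), isGraceful_labelCompletion hmap,
    (SimpleGraph.Hom.ofLE hcompletion).comp (SimpleGraph.Embedding.map ψ G).toHom, ψ.injective⟩

end LabelCompletion

section PowerLabels

variable {b i j k l : ℕ}

lemma le_of_pow_add_pow_eq (hb : 1 < b) (hij : i < j) (hkl : k < l)
    (h : b ^ j + b ^ k = b ^ l + b ^ i) : k ≤ i := by
  by_contra! hik
  have hdvd : b ^ (i + 1) ∣ b ^ l + b ^ i :=
    h ▸ Nat.dvd_add (pow_dvd_pow b hij) (pow_dvd_pow b hik)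
  have hdvd_pow : b ^ (i + 1) ∣ b ^ i :=
    (Nat.dvd_add_right (pow_dvd_pow b (hik.trans hkl))).mp hdvd
  exact absurd ((Nat.pow_dvd_pow_iff_le_right hb).mp hdvd_pow) (Nat.not_succ_le_self i)

lemma eq_and_eq_of_pow_sub_pow_eq (hb : 1 < b) (hij : i < j) (hkl : k < l)
    (h : b ^ j - b ^ i = b ^ l - b ^ k) : i = k ∧ j = l := by
  have hbij := Nat.pow_lt_pow_right hb hij
  have hbkl := Nat.pow_lt_pow_right hb hkl
  have hik : i = k := le_antisymm (le_of_pow_add_pow_eq hb hkl hij (by omega))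
    (le_of_pow_add_pow_eq hb hij hkl (by omega))
  subst hik
  exact ⟨rfl, Nat.pow_right_injective hb (by dsimp only; omega)⟩

lemma exists_lt_of_not_isDiag {α : Type*} [LinearOrder α] {e : Sym2 α} (he : ¬e.IsDiag) :
    ∃ a b : α, a < b ∧ e = s(a, b) := by
  induction e using Sym2.ind with | _ a b =>
  rcases lt_or_gt_of_ne (mt Sym2.mk_isDiag_iff.mpr he) with h | h
  · exact ⟨a, b, h, rfl⟩
  · exact ⟨b, a, h, Sym2.eq_swap⟩

lemma injOn_edgeLabel_pow (hb : 1 < b) :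
    Set.InjOn (edgeLabel (b ^ ·)) {e : Sym2 ℕ | ¬e.IsDiag} := by
  intro e he e' he' h
  obtain ⟨i, j, hij, rfl⟩ := exists_lt_of_not_isDiag he
  obtain ⟨k, l, hkl, rfl⟩ := exists_lt_of_not_isDiag he'
  rw [edgeLabel_mk, edgeLabel_mk, Nat.dist_eq_sub_of_le (Nat.pow_lt_pow_right hb hij).le,
    Nat.dist_eq_sub_of_le (Nat.pow_lt_pow_right hb hkl).le] at h
  obtain ⟨rfl, rfl⟩ := eq_and_eq_of_pow_sub_pow_eq hb hij hkl h
  rfl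

lemma injOn_edgeLabel_pow_comp {V : Type*} (G : SimpleGraph V) (hb : 1 < b) {f : V → ℕ}
    (hf : f.Injective) : Set.InjOn (edgeLabel fun v => b ^ f v) G.edgeSet := by
  intro e he e' he' h
  have hmap : ∀ e ∈ G.edgeSet, ¬(e.map f).IsDiag := fun e he hdiag =>
    G.not_isDiag_of_mem_edgeSet he ((Sym2.isDiag_map hf).mp hdiag)
  have hlabel : edgeLabel (b ^ ·) (e.map f) = edgeLabel (b ^ ·) (e'.map f) := by
    rw [edgeLabel_map, edgeLabel_map]
    exact h
  exact Sym2.map.injective hf (injOn_edgeLabel_pow hb (hmap e he) (hmap e' he') hlabel)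

end PowerLabels

/-- Every finite simple graph can be embedded into a graceful graph
as a subgraph (an injective graph homomorphism into a graceful graph). -/
theorem embed_into_graceful {V : Type*} [Fintype V] (G : SimpleGraph V) :
    ∃ (W : Type) (_ : Fintype W) (H : SimpleGraph W),
      IsGraceful H ∧ ∃ f : G →g H, Function.Injective f := by
  let rank : V → ℕ := fun v => (Fintype.equivFin V v).val
  have hrank : rank.Injective := Fin.val_injective.comp (Fintype.equivFin V).injective
  have hlabels : Function.Injective fun v => 2 ^ rank v :=
    (Nat.pow_right_injective le_rfl).comp hrank
  have hle : ∀ v, 2 ^ rank v ≤ 2 ^ Fintype.card V := fun v =>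
    Nat.pow_le_pow_right two_pos (Fintype.equivFin V v).isLt.le
  obtain ⟨H, hH, hGH⟩ := exists_isGraceful_of_injOn_edgeLabel hlabels hle
    (injOn_edgeLabel_pow_comp G one_lt_two hrank)
  exact ⟨_, inferInstance, H, hH, hGH⟩
end

section
/- Every graceful tree is supergraceful: if a tree T admits a graceful labeling, then T admits a total labeling. (In particular, the Ringel–Rosa–Kotzig conjecture that all trees are graceful implies that all trees are supergraceful.) -/
/-- `φ` is a total labeling of the graph `G` with `p` vertices and `q` edges:
it is injective, the induced edge labels are pairwise distinct, no value is both
a vertex label and an edge label, and the vertex labels together with the edge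
labels form exactly the set `{1, 2, ..., p+q}`. -/
def IsTotalLabeling {V : Type*} (G : SimpleGraph V) (φ : V → ℕ) : Prop :=
  Function.Injective φ ∧
  Set.InjOn (edgeLabel φ) G.edgeSet ∧
  Disjoint (Set.range φ) (edgeLabel φ '' G.edgeSet) ∧
  Set.range φ ∪ edgeLabel φ '' G.edgeSet = Set.Icc 1 (Nat.card V + Nat.card G.edgeSet)

/-- A graph is supergraceful if it admits a total labeling. -/
def IsSupergraceful {V : Type*} (G : SimpleGraph V) : Prop :=
  ∃ φ : V → ℕ, IsTotalLabeling G φ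

theorem edgeLabel_mul_add {V : Type*} (φ : V → ℕ) (a b : ℕ) (e : Sym2 V) :
    edgeLabel (fun v => a * φ v + b) e = a * edgeLabel φ e := by
  induction e with
  | _ u v => simp only [edgeLabel, Sym2.lift_mk, Nat.dist_add_add_right, Nat.dist_mul_left]

theorem disjoint_image_two_mul_add_one_image_two_mul (s t : Set ℕ) :
    Disjoint ((2 * · + 1) '' s) ((2 * ·) '' t) :=
  Set.disjoint_image_image fun _ _ _ _ => Nat.two_mul_ne_two_mul_add_one.symm

theorem image_two_mul_add_one_Iic_union_image_two_mul_Icc (n : ℕ) :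
    (2 * · + 1) '' Set.Iic n ∪ (2 * ·) '' Set.Icc 1 n = Set.Icc 1 (2 * n + 1) := by
  ext k
  simp only [Set.mem_union, Set.mem_image, Set.mem_Iic, Set.mem_Icc]
  constructor
  · rintro (⟨m, hm, rfl⟩ | ⟨m, hm, rfl⟩) <;> omega
  · intro hk
    obtain ⟨m, rfl | rfl⟩ := Nat.even_or_odd' k
    · exact .inr ⟨m, by omega, rfl⟩
    · exact .inl ⟨m, by omega, rfl⟩

theorem range_eq_Iic_of_injective_of_forall_le {V : Type*} {φ : V → ℕ} {n : ℕ}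
    (hφ : Function.Injective φ) (hle : ∀ v, φ v ≤ n) (hn : n < Nat.card V) :
    Set.range φ = Set.Iic n := by
  refine Set.eq_of_subset_of_ncard_le (Set.range_subset_iff.2 hle) ?_ (Set.finite_Iic n)
  rwa [Set.ncard_range_of_injective hφ, Set.ncard_eq_toFinset_card', Set.toFinset_Iic,
    Nat.card_Iic]

/-- The vertex labels become the odd numbers `1, 3, …, 2q + 1` and the edge labels, being
doubled, the even numbers `2, 4, …, 2q`. -/
theorem IsGracefulLabeling.isTotalLabeling_two_mul_add_one {V : Type*} {G : SimpleGraph V}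
    {φ : V → ℕ} (hφ : IsGracefulLabeling G φ) (hG : Nat.card G.edgeSet + 1 = Nat.card V) :
    IsTotalLabeling G (fun v => 2 * φ v + 1) := by
  obtain ⟨hinj, hle, hinjOn, hedges⟩ := hφ
  have hvertices : Set.range φ = Set.Iic (Nat.card G.edgeSet) :=
    range_eq_Iic_of_injective_of_forall_le hinj hle (by omega)
  have hrange : Set.range (fun v => 2 * φ v + 1) = (2 * · + 1) '' Set.range φ :=
    Set.range_comp (2 * · + 1) φ
  have himage : edgeLabel (fun v => 2 * φ v + 1) '' G.edgeSet =
      (2 * ·) '' (edgeLabel φ '' G.edgeSet) := by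
    simp only [Set.image_image, edgeLabel_mul_add]
  have hcount : 2 * Nat.card G.edgeSet + 1 = Nat.card V + Nat.card G.edgeSet := by omega
  refine ⟨fun _ _ huv => hinj (by simpa using huv), fun _ he _ hf hef => hinjOn he hf ?_, ?_, ?_⟩
  · simpa only [edgeLabel_mul_add, Nat.mul_right_inj two_ne_zero] using hef
  · rw [hrange, himage]
    exact disjoint_image_two_mul_add_one_image_two_mul _ _
  · rw [hrange, himage, hvertices, hedges, image_two_mul_add_one_Iic_union_image_two_mul_Icc,
      hcount]

theorem tree_supergraceful_of_graceful_general {V : Type*} (G : SimpleGraph V)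
    (hG : Nat.card G.edgeSet + 1 = Nat.card V) (h : IsGraceful G) : IsSupergraceful G :=
  let ⟨_, hφ⟩ := h
  ⟨_, hφ.isTotalLabeling_two_mul_add_one hG⟩

/-- Every graceful tree is supergraceful. -/
theorem tree_supergraceful_of_graceful {V : Type*} [Fintype V]
    (T : SimpleGraph V) (hT : T.IsTree) (h : IsGraceful T) :
    IsSupergraceful T :=
  tree_supergraceful_of_graceful_general T (SimpleGraph.isTree_iff_connected_and_card.1 hT).2 h
end

section
/- Every finite simple graph can be embedded into a supergraceful graph; that is, for every finite simple graph G there exists a supergraceful graph H (not necessarily connected) containing an induced subgraph isomorphic to G. -/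
/-!
Of two distinct powers of `3`, one is more than twice the other; hence the differences of distinct
powers of `3` are pairwise distinct and are never powers of `3`. So if the vertices of `G` are
labeled by distinct powers of `3`, no value occurs twice among the vertex and edge labels. Every
value below the largest label that does not occur is given to a new isolated vertex.
-/

section

variable {V W : Type*} {G : SimpleGraph V} {φ : V → ℕ}

theorem isTotalLabeling_of_union_eq_Icc {N : ℕ} (hφ : Function.Injective φ)
    (hinj : Set.InjOn (edgeLabel φ) G.edgeSet)
    (hdisj : Disjoint (Set.range φ) (edgeLabel φ '' G.edgeSet))
    (hunion : Set.range φ ∪ edgeLabel φ '' G.edgeSet = Set.Icc 1 N) :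
    IsTotalLabeling G φ := by
  have hfin : (Set.range φ ∪ edgeLabel φ '' G.edgeSet).Finite := hunion ▸ Set.finite_Icc 1 N
  have hcard : Nat.card V + Nat.card G.edgeSet = N :=
    calc Nat.card V + Nat.card G.edgeSet
        = (Set.range φ).ncard + (edgeLabel φ '' G.edgeSet).ncard := by
          rw [← Nat.card_range_of_injective hφ, Nat.card_coe_set_eq, Nat.card_coe_set_eq,
            hinj.ncard_image]
      _ = (Set.Icc 1 N).ncard := by
          rw [← hunion, Set.ncard_union_eq hdisj (hfin.subset Set.subset_union_left)
            (hfin.subset Set.subset_union_right)]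
      _ = N := by rw [← Finset.coe_Icc, Set.ncard_coe_finset, Nat.card_Icc, Nat.add_sub_cancel]
  exact ⟨hφ, hinj, hdisj, hcard ▸ hunion⟩

theorem edgeLabel_comp (ψ : W → ℕ) (g : V → W) :
    edgeLabel (ψ ∘ g) = edgeLabel ψ ∘ Sym2.map g := by
  funext z
  induction z with | _ u v => rfl

theorem image_edgeLabel_edgeSet_map (G : SimpleGraph V) (g : V ↪ W) (ψ : W → ℕ) :
    edgeLabel ψ '' (G.map g).edgeSet = edgeLabel (ψ ∘ g) '' G.edgeSet := by
  rw [SimpleGraph.edgeSet_map, edgeLabel_comp, Set.image_comp]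
  rfl

theorem injOn_edgeLabel_edgeSet_map {g : V ↪ W} {ψ : W → ℕ}
    (h : Set.InjOn (edgeLabel (ψ ∘ g)) G.edgeSet) :
    Set.InjOn (edgeLabel ψ) (G.map g).edgeSet := by
  rw [edgeLabel_comp] at h
  rw [SimpleGraph.edgeSet_map]
  exact h.image_of_comp

theorem exists_edgeLabel_eq_sub (hφ : Function.Injective φ) {z : Sym2 V} (hz : z ∈ G.edgeSet) :
    ∃ a b, z = s(a, b) ∧ φ b < φ a ∧ edgeLabel φ z = φ a - φ b := by
  induction z with | _ u v
  rcases (hφ.ne (SimpleGraph.Adj.ne hz)).lt_or_gt with huv | hvu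
  · exact ⟨v, u, Sym2.eq_swap, huv, Nat.dist_eq_sub_of_le huv.le⟩
  · exact ⟨u, v, rfl, hvu, Nat.dist_eq_sub_of_le_right hvu.le⟩

theorem edgeLabel_mem_Icc {N : ℕ} (hφ : Function.Injective φ) (hN : ∀ v, φ v ≤ N)
    {z : Sym2 V} (hz : z ∈ G.edgeSet) : edgeLabel φ z ∈ Set.Icc 1 N := by
  obtain ⟨a, b, -, hba, hz_eq⟩ := exists_edgeLabel_eq_sub hφ hz
  rw [hz_eq]
  exact ⟨Nat.sub_pos_of_lt hba, (Nat.sub_le _ _).trans (hN a)⟩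

/-- `φ` satisfies the conditions of a total labeling of `G`, except that the positive integers
used as labels need not form an initial segment. Such a `φ` becomes a total labeling once the
unused values are given to new isolated vertices. -/
structure IsPartialTotalLabeling (G : SimpleGraph V) (φ : V → ℕ) : Prop where
  injective : Function.Injective φ
  pos : ∀ v, 0 < φ v
  injOn_edgeLabel : Set.InjOn (edgeLabel φ) G.edgeSet
  disjoint : Disjoint (Set.range φ) (edgeLabel φ '' G.edgeSet)

/-- The values in `{1, ..., N}` that are not edge labels of `G` under `φ`. They are the vertices
of a supergraceful graph containing `G`: those outside the range of `φ` are isolated. -/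
def freeLabels (G : SimpleGraph V) (φ : V → ℕ) (N : ℕ) : Set ℕ :=
  Set.Icc 1 N \ edgeLabel φ '' G.edgeSet

theorem isTotalLabeling_map_freeLabels {N : ℕ} (hinj : Set.InjOn (edgeLabel φ) G.edgeSet)
    (g : V ↪ freeLabels G φ N) (hg : Subtype.val ∘ g = φ) :
    IsTotalLabeling (G.map g) Subtype.val := by
  have himage : edgeLabel Subtype.val '' (G.map g).edgeSet = edgeLabel φ '' G.edgeSet := by
    rw [image_edgeLabel_edgeSet_map, hg]
  have hφ : Function.Injective φ := hg ▸ Subtype.val_injective.comp g.injective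
  have hN : ∀ v, φ v ≤ N := fun v => congrFun hg v ▸ (g v).2.1.2
  have hsubset : edgeLabel φ '' G.edgeSet ⊆ Set.Icc 1 N :=
    Set.image_subset_iff.2 fun _ => edgeLabel_mem_Icc hφ hN
  apply isTotalLabeling_of_union_eq_Icc Subtype.val_injective
  · exact injOn_edgeLabel_edgeSet_map (hg.symm ▸ hinj)
  · rw [himage, Subtype.range_coe]
    exact Set.disjoint_sdiff_left
  · rw [himage, Subtype.range_coe]
    exact Set.sdiff_union_of_subset hsubset

theorem IsPartialTotalLabeling.exists_isSupergraceful_embedding [Finite V]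
    (h : IsPartialTotalLabeling G φ) :
    ∃ (W : Type) (_ : Fintype W) (H : SimpleGraph W),
      IsSupergraceful H ∧ Nonempty (G ↪g H) := by
  obtain ⟨N, hN⟩ := (Set.finite_range φ).bddAbove
  have hfree : ∀ v, φ v ∈ freeLabels G φ N := fun v =>
    ⟨⟨h.pos v, hN ⟨v, rfl⟩⟩, Set.disjoint_left.1 h.disjoint ⟨v, rfl⟩⟩
  let g : V ↪ freeLabels G φ N := ⟨Set.codRestrict φ _ hfree, h.injective.codRestrict hfree⟩
  have : Finite (freeLabels G φ N) := (Set.finite_Icc 1 N).sdiff.to_subtype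
  exact ⟨freeLabels G φ N, Fintype.ofFinite _, G.map g,
    ⟨Subtype.val, isTotalLabeling_map_freeLabels h.injOn_edgeLabel g rfl⟩,
    ⟨SimpleGraph.Embedding.map g G⟩⟩

/-- Of the values of `φ` at two distinct points, one is more than twice the other. A positive
labeling with this property has distinct differences, none of which is itself a label. -/
def IsDoublingSeparated (φ : V → ℕ) : Prop :=
  Pairwise fun u v => 2 * φ u < φ v ∨ 2 * φ v < φ u

namespace IsDoublingSeparated

theorem injective (h : IsDoublingSeparated φ) : Function.Injective φ := by
  intro u v huv
  by_contra hne
  have := h hne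
  omega

theorem eq_of_sub_eq_sub (h : IsDoublingSeparated φ) {a b c d : V} (hba : φ b < φ a)
    (hdc : φ d < φ c) (heq : φ a - φ b = φ c - φ d) : a = c ∧ b = d := by
  have hab := h (ne_of_apply_ne φ hba.ne')
  have hcd := h (ne_of_apply_ne φ hdc.ne')
  have hac : a = c := by
    by_contra hne
    have := h hne
    omega
  subst hac
  exact ⟨rfl, h.injective (by omega)⟩

theorem sub_ne (h : IsDoublingSeparated φ) {a b : V} (hb : 0 < φ b) (hba : φ b < φ a) (w : V) :
    φ a - φ b ≠ φ w := by
  intro heq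
  have hab := h (ne_of_apply_ne φ hba.ne')
  have haw : a ≠ w := by
    rintro rfl
    omega
  have := h haw
  omega

theorem injOn_edgeLabel (h : IsDoublingSeparated φ) (G : SimpleGraph V) :
    Set.InjOn (edgeLabel φ) G.edgeSet := by
  intro y hy z hz hyz
  obtain ⟨a, b, rfl, hba, hab⟩ := exists_edgeLabel_eq_sub h.injective hy
  obtain ⟨c, d, rfl, hdc, hcd⟩ := exists_edgeLabel_eq_sub h.injective hz
  obtain ⟨rfl, rfl⟩ := h.eq_of_sub_eq_sub hba hdc (hab ▸ hcd ▸ hyz)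
  rfl

theorem isPartialTotalLabeling (h : IsDoublingSeparated φ) (hpos : ∀ v, 0 < φ v)
    (G : SimpleGraph V) : IsPartialTotalLabeling G φ where
  injective := h.injective
  pos := hpos
  injOn_edgeLabel := h.injOn_edgeLabel G
  disjoint := by
    rw [Set.disjoint_left]
    rintro _ ⟨w, rfl⟩ ⟨z, hz, hzw⟩
    obtain ⟨a, b, -, hba, hz_eq⟩ := exists_edgeLabel_eq_sub h.injective hz
    exact h.sub_ne (hpos b) hba w (hz_eq ▸ hzw)

end IsDoublingSeparated

theorem isDoublingSeparated_pow {b : ℕ} (hb : 2 < b) :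
    IsDoublingSeparated fun n : ℕ => b ^ n := by
  have two_mul_lt {m n : ℕ} (hmn : m < n) : 2 * b ^ m < b ^ n :=
    calc 2 * b ^ m < b * b ^ m := by gcongr
      _ = b ^ (m + 1) := (pow_succ' b m).symm
      _ ≤ b ^ n := by gcongr <;> omega
  exact fun m n hmn => hmn.lt_or_gt.imp two_mul_lt two_mul_lt

end

/-- Every finite simple graph can be embedded into a supergraceful
graph as an induced subgraph. -/
theorem embed_into_supergraceful {V : Type*} [Fintype V] (G : SimpleGraph V) :
    ∃ (W : Type) (_ : Fintype W) (H : SimpleGraph W),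
      IsSupergraceful H ∧ Nonempty (G ↪g H) := by
  obtain ⟨f, hf⟩ := Countable.exists_injective_nat V
  have hsep : IsDoublingSeparated fun v => 3 ^ f v :=
    (isDoublingSeparated_pow (by norm_num)).comp_of_injective hf
  exact (hsep.isPartialTotalLabeling (fun v => by positivity) G).exists_isSupergraceful_embedding
end
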